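/- arXiv:math/9308207 — 2 statements merged into one kernel-verified Lean document; each statement's English description precedes it below -/
import Mathlib

section
/- Let 1 ≤ p ≤ ∞ and let u : M_N → M_m be a linear map whose regular norm relative to p satisfies ‖u‖_r ≤ C. Then for every n ≥ 1 and every x ∈ M_N ⊗ M_n, ‖(u ⊗ id_{M_n})(x)‖_{S_p} ≤ C ‖x‖_{S_p}, where ‖·‖_{S_p} denotes the plain Schatten p-norm of the matrix x on ℂ^N ⊗ ℂ^n, respectively of (u ⊗ id_{M_n})(x) on ℂ^m ⊗ ℂ^n. (Matrix-algebra form of Proposition 2.2: every regular map is completely bounded with ‖u‖_{cb} ≤ ‖u‖_r, using the Fubini identification S_p^n[S_p^N] = S_p^{nN}.) -/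
open scoped Kronecker ENNReal Classical ComplexOrder
open Matrix

noncomputable section

/-- The operator norm (`S_∞` norm) of a complex matrix, acting on Euclidean space. -/
def opNorm {ι : Type} [Fintype ι] [DecidableEq ι] (a : Matrix ι ι ℂ) : ℝ :=
  ‖LinearMap.toContinuousLinearMap (Matrix.toEuclideanLin a)‖

/-- The Schatten `p`-norm of a complex matrix: the `ℓ^p` norm of its singular values
(the square roots of the eigenvalues of `aᴴ * a`); for `p = ∞` it is the operator norm. -/
def schattenNorm {ι : Type} [Fintype ι] [DecidableEq ι] (p : ℝ≥0∞) (a : Matrix ι ι ℂ) : ℝ :=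
  if p = ∞ then opNorm a
  else (∑ i, Real.sqrt ((Matrix.posSemidef_conjTranspose_mul_self a).isHermitian.eigenvalues i) ^ p.toReal)
      ^ (1 / p.toReal)

/-- Pisier's vector-valued Schatten norm `‖x‖_{S_p^N[M_n]}` on `M_N ⊗ M_n`:
the infimum of `‖a‖_{S_{2p}} ‖y‖_{S_∞} ‖b‖_{S_{2p}}` over factorizations
`x = (a ⊗ 1) · y · (b ⊗ 1)`. -/
def pisierNorm (p : ℝ≥0∞) {N n : ℕ} (x : Matrix (Fin N × Fin n) (Fin N × Fin n) ℂ) : ℝ :=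
  sInf { r | ∃ (a b : Matrix (Fin N) (Fin N) ℂ)
      (y : Matrix (Fin N × Fin n) (Fin N × Fin n) ℂ),
      x = (a ⊗ₖ (1 : Matrix (Fin n) (Fin n) ℂ)) * y * (b ⊗ₖ (1 : Matrix (Fin n) (Fin n) ℂ)) ∧
      r = schattenNorm (2 * p) a * opNorm y * schattenNorm (2 * p) b }

/-- The amplification `u ⊗ id_{M_n} : M_N ⊗ M_n → M_m ⊗ M_n` of a map `u : M_N → M_m`,
acting as `u` on each `M_n`-block entry. -/
def amp {N m n : ℕ} (u : Matrix (Fin N) (Fin N) ℂ → Matrix (Fin m) (Fin m) ℂ)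
    (x : Matrix (Fin N × Fin n) (Fin N × Fin n) ℂ) : Matrix (Fin m × Fin n) (Fin m × Fin n) ℂ :=
  Matrix.of fun ik jl => u (Matrix.of fun i j => x (i, ik.2) (j, jl.2)) ik.1 jl.1

/-- The amplification `id_{M_n} ⊗ u : M_n ⊗ M_N → M_n ⊗ M_m` of a map `u : M_N → M_m`. -/
def ampLeft {n N m : ℕ} (u : Matrix (Fin N) (Fin N) ℂ → Matrix (Fin m) (Fin m) ℂ)
    (x : Matrix (Fin n × Fin N) (Fin n × Fin N) ℂ) : Matrix (Fin n × Fin m) (Fin n × Fin m) ℂ :=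
  Matrix.of fun ki lj => u (Matrix.of fun i j => x (ki.1, i) (lj.1, j)) ki.2 lj.2

/-- The trace pairing `T : M_k ⊗ M_k → ℂ`, with `T(a ⊗ b) = tr(ᵗa·b)`; writing
`z` as a `k×k` matrix of blocks `z_{ij} ∈ M_k`, `T(z) = Σ_{i,j} (z_{ij})_{ij}`. -/
def tracePair {k : ℕ} (z : Matrix (Fin k × Fin k) (Fin k × Fin k) ℂ) : ℂ :=
  ∑ i : Fin k, ∑ j : Fin k, z (i, i) (j, j)

/-- A map `u : M_N → M_m` is completely positive if all its amplifications
`id_{M_n} ⊗ u` preserve positive semidefiniteness. -/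
def CompletelyPositive {N m : ℕ}
    (u : Matrix (Fin N) (Fin N) ℂ → Matrix (Fin m) (Fin m) ℂ) : Prop :=
  ∀ (n : ℕ) (x : Matrix (Fin n × Fin N) (Fin n × Fin N) ℂ),
    x.PosSemidef → (ampLeft u x).PosSemidef

/-- The regular norm (relative to `p`) of `u : M_N → M_m`: the supremum in `[0,∞]`
over `n ≥ 1` of the norms of the amplifications `u ⊗ id_{M_n}` from
`(M_N ⊗ M_n, ‖·‖_{S_p^N[M_n]})` to `(M_m ⊗ M_n, ‖·‖_{S_p^m[M_n]})`. -/
def regNorm (p : ℝ≥0∞) {N m : ℕ}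
    (u : Matrix (Fin N) (Fin N) ℂ → Matrix (Fin m) (Fin m) ℂ) : ℝ≥0∞ :=
  ⨆ (n : ℕ) (x : Matrix (Fin N × Fin (n + 1)) (Fin N × Fin (n + 1)) ℂ)
    (_ : pisierNorm p x ≤ 1), ENNReal.ofReal (pisierNorm p (amp u x))

/-- Pisier's norm `ρ_p` on `M_n ⊗ M_m` (with `q` the conjugate exponent `p'`):
the infimum of `‖γ‖_{S_{2p}} ‖α‖_{S_{2p'}} ‖g‖_{S_∞} ‖δ‖_{S_{2p}} ‖β‖_{S_{2p'}}`
over factorizations `a = (γ ⊗ α) · g · (δ ⊗ β)`. -/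
def rho (p q : ℝ≥0∞) {n m : ℕ} (a : Matrix (Fin n × Fin m) (Fin n × Fin m) ℂ) : ℝ :=
  sInf { r | ∃ (γ δ : Matrix (Fin n) (Fin n) ℂ) (α β : Matrix (Fin m) (Fin m) ℂ)
      (g : Matrix (Fin n × Fin m) (Fin n × Fin m) ℂ),
      a = (γ ⊗ₖ α) * g * (δ ⊗ₖ β) ∧
      r = schattenNorm (2 * p) γ * schattenNorm (2 * q) α * opNorm g *
          schattenNorm (2 * p) δ * schattenNorm (2 * q) β }

/-- The amplification `u ⊗ id_{M_n}` of a map `u` defined only on a subspace `S ⊆ M_N`,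
applied to an element of `M_N ⊗ M_n` all of whose `M_N`-valued block entries lie in `S`. -/
def ampOn {N m n : ℕ} (S : Submodule ℂ (Matrix (Fin N) (Fin N) ℂ))
    (u : S →ₗ[ℂ] Matrix (Fin m) (Fin m) ℂ)
    (x : Matrix (Fin N × Fin n) (Fin N × Fin n) ℂ)
    (h : ∀ k l : Fin n, (Matrix.of fun i j => x (i, k) (j, l)) ∈ S) :
    Matrix (Fin m × Fin n) (Fin m × Fin n) ℂ :=
  Matrix.of fun ik jl => u ⟨Matrix.of fun i j => x (i, ik.2) (j, jl.2), h ik.2 jl.2⟩ ik.1 jl.1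

end

noncomputable section

namespace PisierSchatten

open scoped Matrix.Norms.L2Operator

set_option linter.unusedSectionVars false

variable {ι κ μ ρ : Type} [Fintype ι] [Fintype κ] [Fintype μ] [Fintype ρ]
  [DecidableEq ι] [DecidableEq κ] [DecidableEq μ] [DecidableEq ρ]

/-! ### Contractions -/

open scoped MatrixOrder in
lemma norm_le_one_iff (A : Matrix ι κ ℂ) : ‖A‖ ≤ 1 ↔ (1 - Aᴴ * A).PosSemidef := by
  have h0 : (0 : Matrix κ κ ℂ) ≤ Aᴴ * A :=
    Matrix.nonneg_iff_posSemidef.2 (posSemidef_conjTranspose_mul_self A)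
  rw [← Matrix.le_iff, ← CStarAlgebra.norm_le_one_iff_of_nonneg (Aᴴ * A) h0,
    l2_opNorm_conjTranspose_mul_self]
  constructor
  · intro h; nlinarith [norm_nonneg A]
  · intro h; nlinarith [norm_nonneg A]

lemma norm_le_one_of_mul_conjTranspose_add {A : Matrix ι κ ℂ} {D : Matrix ι ι ℂ}
    (h : A * Aᴴ + D = 1) (hD : D.PosSemidef) : ‖A‖ ≤ 1 := by
  rw [← l2_opNorm_conjTranspose, norm_le_one_iff, conjTranspose_conjTranspose, ← h]
  simpa using hD

lemma norm_transpose_le_one {A : Matrix ι κ ℂ} (h : ‖A‖ ≤ 1) : ‖Aᵀ‖ ≤ 1 := by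
  rw [← l2_opNorm_conjTranspose, norm_le_one_iff, conjTranspose_conjTranspose] at h
  rw [norm_le_one_iff]
  simpa [transpose_mul, conjTranspose, transpose_map] using h.transpose

lemma norm_mul_le_one {A : Matrix ι κ ℂ} {B : Matrix κ μ ℂ} (hA : ‖A‖ ≤ 1) (hB : ‖B‖ ≤ 1) :
    ‖A * B‖ ≤ 1 :=
  (l2_opNorm_mul A B).trans (mul_le_one₀ hA (norm_nonneg _) hB)

lemma norm_one_kronecker_le_one {w : Matrix ι κ ℂ} (h : ‖w‖ ≤ 1) :
    ‖(1 : Matrix ρ ρ ℂ) ⊗ₖ w‖ ≤ 1 := by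
  rw [norm_le_one_iff] at h ⊢
  have e : 1 - ((1 : Matrix ρ ρ ℂ) ⊗ₖ w)ᴴ * ((1 : Matrix ρ ρ ℂ) ⊗ₖ w) =
      (1 : Matrix ρ ρ ℂ) ⊗ₖ (1 - wᴴ * w) := by
    rw [sub_eq_iff_eq_add, conjTranspose_kronecker, ← mul_kronecker_mul, conjTranspose_one, one_mul,
      ← kronecker_add, sub_add_cancel, one_kronecker_one]
  rw [e]
  exact PosSemidef.one.kronecker h

lemma norm_kronecker_one_le_one {w : Matrix ι κ ℂ} (h : ‖w‖ ≤ 1) :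
    ‖w ⊗ₖ (1 : Matrix ρ ρ ℂ)‖ ≤ 1 := by
  rw [norm_le_one_iff] at h ⊢
  have e : 1 - (w ⊗ₖ (1 : Matrix ρ ρ ℂ))ᴴ * (w ⊗ₖ (1 : Matrix ρ ρ ℂ)) =
      (1 - wᴴ * w) ⊗ₖ (1 : Matrix ρ ρ ℂ) := by
    rw [sub_eq_iff_eq_add, conjTranspose_kronecker, ← mul_kronecker_mul, conjTranspose_one, one_mul,
      ← add_kronecker, sub_add_cancel, one_kronecker_one]
  rw [e]
  exact h.kronecker PosSemidef.one

lemma norm_submatrix_equiv_le_one {A : Matrix ι ι ℂ} (e : κ ≃ ι) (h : ‖A‖ ≤ 1) :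
    ‖A.submatrix e e‖ ≤ 1 := by
  rw [norm_le_one_iff] at h ⊢
  have h2 := h.submatrix e
  rwa [submatrix_sub, Pi.sub_apply, Pi.sub_apply, submatrix_one_equiv,
    ← submatrix_mul_equiv _ _ e e e, ← conjTranspose_submatrix] at h2

lemma norm_diagonal_le_one {d : ι → ℂ} (h : ∀ i, ‖d i‖ ≤ 1) : ‖diagonal d‖ ≤ 1 := by
  rw [l2_opNorm_diagonal]
  exact (pi_norm_le_iff_of_nonneg zero_le_one).2 h

lemma norm_le_one_of_conjTranspose_mul_self_eq_diagonal {U : Matrix ι κ ℂ} {d : κ → ℂ}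
    (h : Uᴴ * U = diagonal d) (hd : ∀ i, ‖d i‖ ≤ 1) : ‖U‖ ≤ 1 := by
  have h1 := l2_opNorm_conjTranspose_mul_self U
  rw [h] at h1
  nlinarith [norm_diagonal_le_one hd, norm_nonneg U]

lemma sum_norm_sq_col_le_one {B : Matrix ι κ ℂ} (h : ‖B‖ ≤ 1) (c : κ) :
    ∑ r, ‖B r c‖ ^ 2 ≤ 1 := by
  have h1 := ((norm_le_one_iff B).1 h).diag_nonneg (i := c)
  rw [Matrix.sub_apply, one_apply_eq, mul_apply] at h1
  have h2 : ∑ j, Bᴴ c j * B j c = ((∑ r, ‖B r c‖ ^ 2 : ℝ) : ℂ) := by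
    push_cast
    refine Finset.sum_congr rfl fun r _ => ?_
    rw [conjTranspose_apply, ← Complex.conj_mul']
    rfl
  rw [h2, sub_nonneg] at h1
  exact_mod_cast h1

lemma sum_norm_sq_row_le_one {B : Matrix ι κ ℂ} (h : ‖B‖ ≤ 1) (r : ι) :
    ∑ c, ‖B r c‖ ^ 2 ≤ 1 :=
  sum_norm_sq_col_le_one (norm_transpose_le_one h) r

lemma sum_norm_sq_mulVec_le {A : Matrix ι κ ℂ} (h : ‖A‖ ≤ 1) (v : κ → ℂ) :
    ∑ i, ‖(A *ᵥ v) i‖ ^ 2 ≤ ∑ j, ‖v j‖ ^ 2 := by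
  have h1 := l2_opNorm_mulVec A (WithLp.toLp 2 v)
  have h2 : ‖(WithLp.toLp 2 (A *ᵥ v) : EuclideanSpace ℂ ι)‖ ≤
      ‖(WithLp.toLp 2 v : EuclideanSpace ℂ κ)‖ := h1.trans (by
    nlinarith [norm_nonneg (WithLp.toLp 2 v : EuclideanSpace ℂ κ)])
  have h3 := pow_le_pow_left₀ (norm_nonneg _) h2 2
  simpa [EuclideanSpace.norm_sq_eq] using h3

lemma sum_norm_sq_mul_left_le {A : Matrix ι κ ℂ} (h : ‖A‖ ≤ 1) (M : Matrix κ μ ℂ) :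
    ∑ i, ∑ j, ‖(A * M) i j‖ ^ 2 ≤ ∑ i, ∑ j, ‖M i j‖ ^ 2 := by
  rw [Finset.sum_comm, Finset.sum_comm (f := fun i j => ‖M i j‖ ^ 2)]
  exact Finset.sum_le_sum fun c _ => sum_norm_sq_mulVec_le h fun k => M k c

lemma sum_norm_sq_mul_right_le {D : Matrix κ μ ℂ} (h : ‖D‖ ≤ 1) (M : Matrix ι κ ℂ) :
    ∑ i, ∑ j, ‖(M * D) i j‖ ^ 2 ≤ ∑ i, ∑ j, ‖M i j‖ ^ 2 := by
  have h1 := sum_norm_sq_mul_left_le (norm_transpose_le_one h) Mᵀ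
  rw [← transpose_mul] at h1
  rw [Finset.sum_comm, Finset.sum_comm (f := fun i j => ‖M i j‖ ^ 2)]
  exact h1

lemma norm_dotProduct_mulVec_le (y : Matrix ι κ ℂ) (ξ : ι → ℂ) (η : κ → ℂ) :
    ‖ξ ⬝ᵥ (y *ᵥ η)‖ ≤ √(∑ i, ‖ξ i‖ ^ 2) * ‖y‖ * √(∑ j, ‖η j‖ ^ 2) := by
  have h1 := l2_opNorm_mulVec y (WithLp.toLp 2 η)
  have h2 := norm_inner_le_norm (𝕜 := ℂ) (WithLp.toLp 2 (star ξ) : EuclideanSpace ℂ ι)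
    (WithLp.toLp 2 (y *ᵥ η))
  rw [EuclideanSpace.inner_toLp_toLp, star_star, dotProduct_comm] at h2
  have h3 : ‖(WithLp.toLp 2 (star ξ) : EuclideanSpace ℂ ι)‖ = √(∑ i, ‖ξ i‖ ^ 2) := by
    simp [EuclideanSpace.norm_eq]
  have h4 : ‖(WithLp.toLp 2 η : EuclideanSpace ℂ κ)‖ = √(∑ i, ‖η i‖ ^ 2) := by
    simp [EuclideanSpace.norm_eq]
  rw [h3] at h2
  rw [h4] at h1
  calc _ ≤ _ := h2
    _ ≤ √(∑ i, ‖ξ i‖ ^ 2) * (‖y‖ * √(∑ j, ‖η j‖ ^ 2)) := by gcongr; exact h1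
    _ = _ := by ring

/-! ### Singular value decompositions -/

/-- `x = U diag(s) Vᴴ` with `s ≥ 0`, where `U` and `V` are contractions whose columns belonging to
nonzero singular values are orthonormal. -/
structure IsSVD (x U V : Matrix ι ι ℂ) (s : ι → ℝ) : Prop where
  nonneg : ∀ i, 0 ≤ s i
  norm_left : ‖U‖ ≤ 1
  norm_right : ‖V‖ ≤ 1
  left : ∀ i j, s j ≠ 0 → (Uᴴ * U) i j = (1 : Matrix ι ι ℂ) i j
  right : ∀ i j, s j ≠ 0 → (Vᴴ * V) i j = (1 : Matrix ι ι ℂ) i j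
  eq : x = U * diagonal (fun i => (s i : ℂ)) * Vᴴ

lemma exists_unitary_diagonalization {A : Matrix ι ι ℂ} (hA : A.IsHermitian) :
    ∃ V : Matrix ι ι ℂ, Vᴴ * V = 1 ∧ V * Vᴴ = 1 ∧
      A = V * diagonal (fun i => (hA.eigenvalues i : ℂ)) * Vᴴ :=
  ⟨hA.eigenvectorUnitary.1, Unitary.coe_star_mul_self hA.eigenvectorUnitary,
    Unitary.coe_mul_star_self hA.eigenvectorUnitary, hA.spectral_theorem⟩

lemma exists_isSVD (x : Matrix ι ι ℂ) : ∃ U V : Matrix ι ι ℂ,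
    IsSVD x U V fun i => √((posSemidef_conjTranspose_mul_self x).isHermitian.eigenvalues i) := by
  have hps := posSemidef_conjTranspose_mul_self x
  set hH := hps.isHermitian
  set lam := hH.eigenvalues with hlam
  have hl0 : ∀ i, 0 ≤ lam i := hps.eigenvalues_nonneg
  obtain ⟨V, hVV, hVV', hsp⟩ := exists_unitary_diagonalization hH
  rw [← hlam] at hsp
  have hD : ∀ e : ι → ℝ, (x * V * diagonal fun i => (e i : ℂ))ᴴ *
      (x * V * diagonal fun i => (e i : ℂ)) =
      diagonal fun i => ((e i * lam i * e i : ℝ) : ℂ) := by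
    intro e
    have : (diagonal fun i => (e i : ℂ))ᴴ = diagonal fun i => (e i : ℂ) := by
      rw [diagonal_conjTranspose]; congr 1; ext i; simp
    rw [conjTranspose_mul, conjTranspose_mul, this]
    calc _ = diagonal (fun i => (e i : ℂ)) * (Vᴴ * (xᴴ * x) * V) * diagonal fun i => (e i : ℂ) := by
          simp only [Matrix.mul_assoc]
      _ = diagonal (fun i => (e i : ℂ)) * ((Vᴴ * V) * diagonal (fun i => (lam i : ℂ)) * (Vᴴ * V)) *
          diagonal fun i => (e i : ℂ) := by rw [hsp]; simp only [Matrix.mul_assoc]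
      _ = _ := by
          rw [hVV, Matrix.one_mul, Matrix.mul_one, diagonal_mul_diagonal, diagonal_mul_diagonal]
          simp
  have hsq : ∀ i, √(lam i) * √(lam i) = lam i := fun i => Real.mul_self_sqrt (hl0 i)
  have hUU := hD fun i => (√(lam i))⁻¹
  refine ⟨x * V * diagonal fun i => (((√(lam i))⁻¹ : ℝ) : ℂ), V,
    fun i => Real.sqrt_nonneg _, ?_, ?_,
    ?_, ?_, ?_⟩
  · refine norm_le_one_of_conjTranspose_mul_self_eq_diagonal hUU fun i => ?_
    rw [Complex.norm_real, ← hsq i]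
    by_cases h : √(lam i) = 0
    · simp [h]
    · simp [h]
  · exact norm_le_one_of_conjTranspose_mul_self_eq_diagonal (d := 1) (by simpa using hVV)
      fun i => by simp
  · intro i j hj
    rw [hUU, diagonal_apply, one_apply]
    by_cases hij : i = j
    · subst hij
      rw [if_pos rfl, if_pos rfl, ← hsq i]
      simp [show √(lam i) ≠ 0 from hj]
    · rw [if_neg hij, if_neg hij]
  · intro i j _
    rw [hVV]
  · have h0 : x * V * diagonal (fun i => ((1 - (√(lam i))⁻¹ * √(lam i) : ℝ) : ℂ)) = 0 := by
      rw [← conjTranspose_mul_self_eq_zero, hD]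
      refine diagonal_eq_zero.2 (funext fun i => ?_)
      norm_cast
      rw [← hsq i]
      by_cases h : √(lam i) = 0
      · simp [h]
      · simp [h]
    have h1 : x * V = x * V * diagonal (fun i => (((√(lam i))⁻¹ : ℝ) : ℂ)) *
        diagonal (fun i => ((√(lam i) : ℝ) : ℂ)) := by
      rw [← sub_eq_zero, ← h0, Matrix.mul_assoc, diagonal_mul_diagonal]
      nth_rw 1 [← Matrix.mul_one (x * V)]
      rw [← Matrix.mul_sub, ← diagonal_one, diagonal_sub]
      simp
    rw [← h1, Matrix.mul_assoc, hVV', Matrix.mul_one]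

lemma IsSVD.map_conj {x U V : Matrix ι ι ℂ} {s : ι → ℝ} (h : IsSVD x U V s) :
    IsSVD (x.map (starRingEnd ℂ)) (U.map (starRingEnd ℂ)) (V.map (starRingEnd ℂ)) s := by
  have hc : ∀ A : Matrix ι ι ℂ, A.map (starRingEnd ℂ) = Aᴴᵀ := fun A => rfl
  have hone : ∀ i j, starRingEnd ℂ ((1 : Matrix ι ι ℂ) i j) = (1 : Matrix ι ι ℂ) i j := by
    intro i j
    rw [one_apply]
    split_ifs <;> simp
  have hprod : ∀ A : Matrix ι ι ℂ, (A.map (starRingEnd ℂ))ᴴ * A.map (starRingEnd ℂ) =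
      (Aᴴ * A).map (starRingEnd ℂ) := by
    intro A
    rw [Matrix.map_mul]
    rfl
  refine ⟨h.nonneg, ?_, ?_, ?_, ?_, ?_⟩
  · rw [hc]
    exact norm_transpose_le_one (by rw [l2_opNorm_conjTranspose]; exact h.norm_left)
  · rw [hc]
    exact norm_transpose_le_one (by rw [l2_opNorm_conjTranspose]; exact h.norm_right)
  · intro i j hj
    rw [hprod, map_apply, h.left i j hj, hone]
  · intro i j hj
    rw [hprod, map_apply, h.right i j hj, hone]
  · conv_lhs => rw [h.eq]
    rw [Matrix.map_mul, Matrix.map_mul, diagonal_map (map_zero _)]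
    congr 2
    congr 1
    ext i
    simp

/-- The Schatten norm in terms of the singular values for a finite exponent. -/
lemma exists_isSVD_schattenNorm {p : ℝ≥0∞} (hp : p ≠ ∞) (x : Matrix ι ι ℂ) :
    ∃ (U V : Matrix ι ι ℂ) (s : ι → ℝ), IsSVD x U V s ∧
      schattenNorm p x = (∑ i, s i ^ p.toReal) ^ (1 / p.toReal) := by
  obtain ⟨U, V, h⟩ := exists_isSVD x
  exact ⟨U, V, _, h, by rw [schattenNorm, if_neg hp]⟩

lemma schattenNorm_nonneg (p : ℝ≥0∞) (x : Matrix ι ι ℂ) : 0 ≤ schattenNorm p x := by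
  rw [schattenNorm]
  split_ifs
  · exact norm_nonneg _
  · exact Real.rpow_nonneg (Finset.sum_nonneg fun i _ => Real.rpow_nonneg (Real.sqrt_nonneg _) _) _

lemma sum_eigenvalues_eq_of_diagonalization {B W : Matrix ι ι ℂ} (hB : B.IsHermitian) {d : ι → ℝ}
    (hW : Wᴴ * W = 1) (h : B = W * diagonal (fun i => (d i : ℂ)) * Wᴴ) (f : ℝ → ℝ) :
    ∑ i, f (hB.eigenvalues i) = ∑ i, f (d i) := by
  have h1 : B.charpoly = (diagonal fun i => (d i : ℂ)).charpoly := by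
    rw [h, charpoly_mul_comm, ← Matrix.mul_assoc, hW, Matrix.one_mul]
  have h2 : B.charpoly.roots = Multiset.map (fun i => (d i : ℂ)) Finset.univ.val := by
    rw [h1, charpoly_diagonal]
    exact Polynomial.roots_multiset_prod_X_sub_C (Multiset.map (fun i => (d i : ℂ)) _) ▸ by simp
  rw [hB.roots_charpoly_eq_eigenvalues] at h2
  have h3 := congrArg (fun m => (m.map fun z : ℂ => f z.re).sum) h2
  simpa using h3

/-! ### Complex powers of positive definite matrices -/

/-- The complex power `A ^ z` of a Hermitian matrix (used for positive definite `A`). -/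
def hpow {A : Matrix ι ι ℂ} (hA : A.IsHermitian) (z : ℂ) : Matrix ι ι ℂ :=
  (hA.eigenvectorUnitary : Matrix ι ι ℂ) * diagonal (fun i => (hA.eigenvalues i : ℂ) ^ z) *
    (hA.eigenvectorUnitary : Matrix ι ι ℂ)ᴴ

lemma eigenvectorUnitary_conjTranspose_mul {A : Matrix ι ι ℂ} (hA : A.IsHermitian) :
    (hA.eigenvectorUnitary : Matrix ι ι ℂ)ᴴ * (hA.eigenvectorUnitary : Matrix ι ι ℂ) = 1 :=
  Unitary.coe_star_mul_self hA.eigenvectorUnitary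

lemma eigenvectorUnitary_mul_conjTranspose {A : Matrix ι ι ℂ} (hA : A.IsHermitian) :
    (hA.eigenvectorUnitary : Matrix ι ι ℂ) * (hA.eigenvectorUnitary : Matrix ι ι ℂ)ᴴ = 1 :=
  Unitary.coe_mul_star_self hA.eigenvectorUnitary

lemma norm_eigenvectorUnitary_le {A : Matrix ι ι ℂ} (hA : A.IsHermitian) :
    ‖(hA.eigenvectorUnitary : Matrix ι ι ℂ)‖ ≤ 1 :=
  norm_le_one_of_conjTranspose_mul_self_eq_diagonal (d := 1)
    (by simpa using eigenvectorUnitary_conjTranspose_mul hA) fun i => by simp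

section hpow

variable {A : Matrix ι ι ℂ} (hA : A.PosDef)

lemma hpow_mul_hpow (z w : ℂ) :
    hpow hA.isHermitian z * hpow hA.isHermitian w = hpow hA.isHermitian (z + w) := by
  rw [hpow, hpow, hpow]
  set W := (hA.isHermitian.eigenvectorUnitary : Matrix ι ι ℂ)
  set lam := hA.isHermitian.eigenvalues with hlam
  calc _ = W * diagonal (fun i => (lam i : ℂ) ^ z) * (Wᴴ * W) *
        diagonal (fun i => (lam i : ℂ) ^ w) * Wᴴ := by simp only [Matrix.mul_assoc]
    _ = _ := by
      rw [eigenvectorUnitary_conjTranspose_mul, Matrix.mul_one, Matrix.mul_assoc W,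
        diagonal_mul_diagonal]
      congr 3
      ext i
      rw [Complex.cpow_add _ _ (by exact_mod_cast (hA.eigenvalues_pos i).ne')]

lemma hpow_zero : hpow hA.isHermitian 0 = 1 := by
  rw [hpow]
  simp only [Complex.cpow_zero, diagonal_one, Matrix.mul_one]
  exact eigenvectorUnitary_mul_conjTranspose _

lemma hpow_one : hpow hA.isHermitian 1 = A := by
  rw [hpow]
  simp only [Complex.cpow_one]
  exact hA.isHermitian.spectral_theorem.symm

lemma hpow_conjTranspose (z : ℂ) :
    (hpow hA.isHermitian z)ᴴ = hpow hA.isHermitian (starRingEnd ℂ z) := by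
  rw [hpow, hpow, conjTranspose_mul, conjTranspose_mul, conjTranspose_conjTranspose,
    diagonal_conjTranspose, Matrix.mul_assoc]
  congr 3
  ext i
  have h := (hA.eigenvalues_pos i).le
  rw [Pi.star_apply, RCLike.star_def, Complex.cpow_conj, Complex.conj_ofReal]
  rw [Complex.arg_ofReal_of_nonneg h]
  exact Real.pi_pos.ne

lemma norm_hpow_le_one {z : ℂ} (hz : z.re = 0) : ‖hpow hA.isHermitian z‖ ≤ 1 := by
  refine norm_mul_le_one (norm_mul_le_one (norm_eigenvectorUnitary_le _) ?_) ?_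
  · refine norm_diagonal_le_one fun i => ?_
    rw [Complex.norm_cpow_eq_rpow_re_of_pos (hA.eigenvalues_pos i), hz, Real.rpow_zero]
  · rw [l2_opNorm_conjTranspose]
    exact norm_eigenvectorUnitary_le _

lemma ofReal_eigenvalues_cpow (r : ℝ) (i : ι) :
    (hA.isHermitian.eigenvalues i : ℂ) ^ (r : ℂ) =
      ((hA.isHermitian.eigenvalues i ^ r : ℝ) : ℂ) := by
  rw [Complex.ofReal_cpow (hA.eigenvalues_pos i).le]

lemma schattenNorm_hpow {p : ℝ≥0∞} (hp : 1 ≤ p) (hpt : p ≠ ∞) :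
    schattenNorm (2 * p) (hpow hA.isHermitian ((1 / p.toReal / 2 : ℝ) : ℂ)) =
      A.trace.re ^ (1 / p.toReal / 2) := by
  have hp0 : 0 < p.toReal := ENNReal.toReal_pos (by positivity) hpt
  set W := (hA.isHermitian.eigenvectorUnitary : Matrix ι ι ℂ) with hWdef
  have hlam := fun i => hA.eigenvalues_pos i
  set H := hpow hA.isHermitian ((1 / p.toReal / 2 : ℝ) : ℂ) with hH
  have hHH : Hᴴ * H = W * diagonal (fun i =>
      ((hA.isHermitian.eigenvalues i ^ (1 / p.toReal) : ℝ) : ℂ)) * Wᴴ := by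
    rw [hH, hpow_conjTranspose hA, hpow_mul_hpow hA, Complex.conj_ofReal, ← Complex.ofReal_add,
      add_halves, hpow]
    congr 3
    ext i
    exact ofReal_eigenvalues_cpow hA _ i
  rw [schattenNorm, if_neg (ENNReal.mul_ne_top (by simp) hpt), ENNReal.toReal_mul,
    ENNReal.toReal_ofNat]
  rw [sum_eigenvalues_eq_of_diagonalization _ (eigenvectorUnitary_conjTranspose_mul _) hHH
    (fun t => √t ^ (2 * p.toReal))]
  congr 1
  · rw [hA.isHermitian.trace_eq_sum_eigenvalues]
    simp only [Complex.coe_algebraMap, Complex.re_sum,  Complex.ofReal_re]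
    refine Finset.sum_congr rfl fun i _ => ?_
    rw [Real.rpow_mul (Real.sqrt_nonneg _), Real.rpow_two,
      Real.sq_sqrt (Real.rpow_nonneg (hlam i).le _), ← Real.rpow_mul (hlam i).le,
      one_div_mul_cancel hp0.ne', Real.rpow_one]
  · field_simp

end hpow

/-! ### Partial traces -/

/-- The partial trace over the second tensor factor. -/
def ptr (A : Matrix (ι × κ) (ι × κ) ℂ) : Matrix ι ι ℂ := of fun i j => ∑ k, A (i, k) (j, k)

lemma trace_ptr (A : Matrix (ι × κ) (ι × κ) ℂ) : (ptr A).trace = A.trace := by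
  simp [ptr, trace, Fintype.sum_prod_type]

lemma ptr_kronecker_one_mul (a : Matrix ι ι ℂ) (A : Matrix (ι × κ) (ι × κ) ℂ) :
    ptr ((a ⊗ₖ (1 : Matrix κ κ ℂ)) * A) = a * ptr A := by
  ext i j
  simp only [ptr, of_apply, mul_apply, kroneckerMap_apply, Fintype.sum_prod_type, one_apply,
    mul_ite, mul_one, mul_zero, ite_mul, zero_mul, Finset.sum_ite_eq, Finset.mem_univ, if_true,
    Finset.mul_sum]
  exact Finset.sum_comm

lemma ptr_mul_kronecker_one (b : Matrix ι ι ℂ) (A : Matrix (ι × κ) (ι × κ) ℂ) :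
    ptr (A * (b ⊗ₖ (1 : Matrix κ κ ℂ))) = ptr A * b := by
  ext i j
  simp only [ptr, of_apply, mul_apply, kroneckerMap_apply, Fintype.sum_prod_type, one_apply,
    mul_ite, mul_one, mul_zero, Finset.sum_ite_eq', Finset.mem_univ, if_true, Finset.sum_mul]
  exact Finset.sum_comm

lemma PosSemidef.ptr {A : Matrix (ι × κ) (ι × κ) ℂ} (hA : A.PosSemidef) :
    (PisierSchatten.ptr A).PosSemidef := by
  have h : PisierSchatten.ptr A = ∑ k, A.submatrix (fun i => (i, k)) fun i => (i, k) := by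
    ext i j
    simp [PisierSchatten.ptr, Matrix.sum_apply]
  rw [h]
  exact posSemidef_sum _ fun k _ => hA.submatrix _

/-- The regularized marginal `tr_κ (U diag(s ^ p) Uᴴ) + ε`. -/
def marginal (U : Matrix (ι × κ) (ι × κ) ℂ) (s : ι × κ → ℝ) (p ε : ℝ) : Matrix ι ι ℂ :=
  ptr (U * diagonal (fun i => ((s i ^ p : ℝ) : ℂ)) * Uᴴ) + (ε : ℂ) • 1

section marginal

variable {U : Matrix (ι × κ) (ι × κ) ℂ} {s : ι × κ → ℝ} {p ε : ℝ}

lemma marginal_posDef (hs : ∀ i, 0 ≤ s i) (hε : 0 < ε) : (marginal U s p ε).PosDef := by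
  refine PosDef.posSemidef_add (PosSemidef.ptr ?_) (PosDef.one.smul (by exact_mod_cast hε))
  refine (PosSemidef.diagonal fun i => ?_).mul_mul_conjTranspose_same U
  rw [Pi.zero_apply]
  exact Complex.zero_le_real.2 (Real.rpow_nonneg (hs i) p)

lemma trace_marginal (hp : p ≠ 0) (hU : ∀ i j, s j ≠ 0 → (Uᴴ * U) i j = (1 : Matrix _ _ ℂ) i j) :
    (marginal U s p ε).trace.re = ∑ i, s i ^ p + Fintype.card ι * ε := by
  rw [marginal, trace_add, trace_ptr, trace_smul, trace_one, trace_mul_comm, ← Matrix.mul_assoc]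
  have h : (Uᴴ * U * diagonal (fun i => ((s i ^ p : ℝ) : ℂ))).trace =
      ((∑ i, s i ^ p : ℝ) : ℂ) := by
    push_cast
    refine Finset.sum_congr rfl fun i _ => ?_
    rw [diag_apply, mul_diagonal]
    by_cases hi : s i = 0
    · simp [hi, Real.zero_rpow hp]
    · rw [hU i i hi, one_apply_eq, one_mul]
  rw [h]
  simp [mul_comm]

lemma ptr_marginal_normalized (hL : (marginal U s p ε).PosDef) {z : ℂ} (hz : z.re = -1 / 2)
    {d : ι × κ → ℂ} (hd : ∀ i, d i * starRingEnd ℂ (d i) = ((s i ^ p : ℝ) : ℂ)) :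
    ptr (((hpow hL.isHermitian z ⊗ₖ (1 : Matrix κ κ ℂ)) * U * diagonal d) *
        ((hpow hL.isHermitian z ⊗ₖ (1 : Matrix κ κ ℂ)) * U * diagonal d)ᴴ) +
      (ε : ℂ) • (hpow hL.isHermitian z * (hpow hL.isHermitian z)ᴴ) = 1 := by
  set H := hpow hL.isHermitian z with hH
  have e : ((H ⊗ₖ (1 : Matrix κ κ ℂ)) * U * diagonal d) *
        ((H ⊗ₖ (1 : Matrix κ κ ℂ)) * U * diagonal d)ᴴ =
      (H ⊗ₖ (1 : Matrix κ κ ℂ)) * (U * diagonal (fun i => ((s i ^ p : ℝ) : ℂ)) * Uᴴ) *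
        (Hᴴ ⊗ₖ (1 : Matrix κ κ ℂ)) := by
    have hdd : diagonal (fun i => ((s i ^ p : ℝ) : ℂ)) = diagonal d * (diagonal d)ᴴ := by
      rw [diagonal_conjTranspose, diagonal_mul_diagonal]
      congr 1
      ext i
      exact (hd i).symm
    rw [hdd, conjTranspose_mul, conjTranspose_mul, conjTranspose_kronecker, conjTranspose_one]
    simp only [Matrix.mul_assoc]
  rw [e, ptr_mul_kronecker_one, ptr_kronecker_one_mul]
  have h1 : ptr (U * diagonal (fun i => ((s i ^ p : ℝ) : ℂ)) * Uᴴ) =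
      hpow hL.isHermitian 1 - (ε : ℂ) • 1 := by
    rw [hpow_one hL, marginal, add_sub_cancel_right]
  have h2 : z + 1 + starRingEnd ℂ z = 0 := by
    apply Complex.ext
    · simp [hz]; norm_num
    · simp
  rw [h1, Matrix.mul_sub, Matrix.sub_mul, hH, hpow_mul_hpow hL,
    hpow_conjTranspose hL, hpow_mul_hpow hL, h2,
    hpow_zero hL]
  simp

end marginal

/-! ### Contraction of the second tensor factors -/

/-- Contraction of `y ∈ M_ι ⊗ M_κ` with `w ∈ M_μ ⊗ M_κ` along `M_κ`. -/
def contr (y : Matrix (ι × κ) (ι × κ) ℂ) (w : Matrix (μ × κ) (μ × κ) ℂ) :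
    Matrix (ι × μ) (ι × μ) ℂ :=
  of fun a b => ∑ k, ∑ l, y (a.1, k) (b.1, l) * w (a.2, k) (b.2, l)

lemma contr_comm (y : Matrix (ι × κ) (ι × κ) ℂ) (w : Matrix (μ × κ) (μ × κ) ℂ) :
    contr y w = (contr w y).submatrix (Equiv.prodComm ι μ) (Equiv.prodComm ι μ) := by
  ext a b
  simp [contr, mul_comm]

lemma kronecker_one_mul_apply (a : Matrix ι ι ℂ) (y : Matrix (ι × κ) ρ ℂ) (i : ι) (k : κ) (r : ρ) :
    ((a ⊗ₖ (1 : Matrix κ κ ℂ)) * y) (i, k) r = ∑ j, a i j * y (j, k) r := by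
  simp only [mul_apply, kroneckerMap_apply, Fintype.sum_prod_type, one_apply,
    mul_ite, mul_one, mul_zero, ite_mul, zero_mul, Finset.sum_ite_eq, Finset.mem_univ, if_true]

lemma mul_kronecker_one_apply (b : Matrix ι ι ℂ) (y : Matrix ρ (ι × κ) ℂ) (r : ρ) (j : ι) (l : κ) :
    (y * (b ⊗ₖ (1 : Matrix κ κ ℂ))) r (j, l) = ∑ i, y r (i, l) * b i j := by
  simp only [mul_apply, kroneckerMap_apply, Fintype.sum_prod_type, one_apply,
    mul_ite, mul_one, mul_zero, Finset.sum_ite_eq', Finset.mem_univ, if_true]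

lemma contr_kronecker_one_mul (a : Matrix ι ι ℂ) (y : Matrix (ι × κ) (ι × κ) ℂ)
    (w : Matrix (μ × κ) (μ × κ) ℂ) :
    contr ((a ⊗ₖ (1 : Matrix κ κ ℂ)) * y) w = (a ⊗ₖ (1 : Matrix μ μ ℂ)) * contr y w := by
  ext ⟨i, i'⟩ ⟨j, j'⟩
  simp only [kronecker_one_mul_apply, contr, of_apply, Finset.mul_sum, Finset.sum_mul]
  simp_rw [← mul_assoc]
  exact (Finset.sum_congr rfl fun k _ => Finset.sum_comm).trans Finset.sum_comm

lemma contr_mul_kronecker_one (b : Matrix ι ι ℂ) (y : Matrix (ι × κ) (ι × κ) ℂ)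
    (w : Matrix (μ × κ) (μ × κ) ℂ) :
    contr (y * (b ⊗ₖ (1 : Matrix κ κ ℂ))) w = contr y w * (b ⊗ₖ (1 : Matrix μ μ ℂ)) := by
  ext ⟨i, i'⟩ ⟨j, j'⟩
  simp only [mul_kronecker_one_apply, contr, of_apply, Finset.sum_mul]
  simp_rw [mul_right_comm]
  exact (Finset.sum_congr rfl fun k _ => Finset.sum_comm).trans Finset.sum_comm

/-- The matrix `A`, with its index `κ` moved to the column side, tensored with the identity. -/
def lift (μ : Type) [DecidableEq μ] (A : Matrix (ι × κ) ρ ℂ) : Matrix (ι × μ) (ρ × μ × κ) ℂ :=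
  of fun a c => if a.2 = c.2.1 then A (a.1, c.2.2) c.1 else 0

lemma mul_conjTranspose_lift_apply {σ : Type} (B : Matrix (ι × κ) ρ ℂ)
    (y : Matrix σ (ρ × μ × κ) ℂ) (r : σ)
    (j : ι) (j' : μ) :
    (y * (lift μ B)ᴴ) r (j, j') = ∑ t, ∑ l, y r (t, j', l) * star (B (j, l) t) := by
  simp only [mul_apply, conjTranspose_apply, lift, of_apply, Fintype.sum_prod_type (α₁ := ρ),
    Fintype.sum_prod_type (α₁ := μ)]
  refine Finset.sum_congr rfl fun t _ => ?_
  rw [Finset.sum_eq_single j' (fun c _ hc => by simp [Ne.symm hc]) (by simp)]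
  simp

lemma lift_mul_one_kronecker_apply (A : Matrix (ι × κ) ρ ℂ) (w : Matrix (μ × κ) (μ × κ) ℂ) (i : ι)
    (i' j' : μ) (t : ρ) (l : κ) :
    (lift μ A * ((1 : Matrix ρ ρ ℂ) ⊗ₖ w)) (i, i') (t, j', l) =
      ∑ k, A (i, k) t * w (i', k) (j', l) := by
  simp only [mul_apply, kroneckerMap_apply, lift, of_apply, Fintype.sum_prod_type (α₁ := ρ),
    Fintype.sum_prod_type (α₁ := μ)]
  rw [Finset.sum_eq_single t (fun c _ hc => by simp [one_apply_ne hc]) (by simp),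
    Finset.sum_eq_single i' (fun c _ hc => by simp [Ne.symm hc]) (by simp)]
  simp

lemma contr_mul_conjTranspose (A B : Matrix (ι × κ) (ι × κ) ℂ) (w : Matrix (μ × κ) (μ × κ) ℂ) :
    contr (A * Bᴴ) w =
      lift μ A * ((1 : Matrix (ι × κ) (ι × κ) ℂ) ⊗ₖ w) * (lift μ B)ᴴ := by
  ext ⟨i, i'⟩ ⟨j, j'⟩
  rw [mul_conjTranspose_lift_apply]
  simp only [lift_mul_one_kronecker_apply, contr, of_apply, mul_apply (M := A),
    conjTranspose_apply, Finset.sum_mul]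
  simp_rw [mul_right_comm]
  refine (Finset.sum_congr rfl fun k _ => Finset.sum_comm).trans ?_
  refine Finset.sum_comm.trans (Finset.sum_congr rfl fun t _ => Finset.sum_comm)

lemma lift_mul_conjTranspose (A : Matrix (ι × κ) (ι × κ) ℂ) :
    lift μ A * (lift μ A)ᴴ = ptr (A * Aᴴ) ⊗ₖ (1 : Matrix μ μ ℂ) := by
  ext ⟨i, i'⟩ ⟨j, j'⟩
  rw [mul_conjTranspose_lift_apply]
  simp only [lift, of_apply, kroneckerMap_apply, ptr, mul_apply, conjTranspose_apply, one_apply]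
  split_ifs
  · rw [mul_one]
    exact Finset.sum_comm
  · simp

lemma norm_lift_le_one {A : Matrix (ι × κ) (ι × κ) ℂ} {D : Matrix ι ι ℂ}
    (h : ptr (A * Aᴴ) + D = 1) (hD : D.PosSemidef) : ‖lift μ A‖ ≤ 1 := by
  refine norm_le_one_of_mul_conjTranspose_add (D := D ⊗ₖ (1 : Matrix μ μ ℂ)) ?_
    (hD.kronecker PosSemidef.one)
  rw [lift_mul_conjTranspose, ← add_kronecker, h, one_kronecker_one]

lemma norm_contr_le_one {A B : Matrix (ι × κ) (ι × κ) ℂ} {D E : Matrix ι ι ℂ}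
    {w : Matrix (μ × κ) (μ × κ) ℂ} (hA : ptr (A * Aᴴ) + D = 1) (hD : D.PosSemidef)
    (hB : ptr (B * Bᴴ) + E = 1) (hE : E.PosSemidef) (hw : ‖w‖ ≤ 1) :
    ‖contr (A * Bᴴ) w‖ ≤ 1 := by
  rw [contr_mul_conjTranspose]
  refine norm_mul_le_one (norm_mul_le_one (norm_lift_le_one hA hD)
    (norm_one_kronecker_le_one hw)) ?_
  rw [l2_opNorm_conjTranspose]
  exact norm_lift_le_one hB hE

/-! ### Bounded entire functions on the strip -/

/-- Entire functions which are bounded on the strip `0 ≤ re z ≤ 1`. -/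
def StripBounded {E : Type*} [NormedAddCommGroup E] [NormedSpace ℂ E] (f : ℂ → E) : Prop :=
  Differentiable ℂ f ∧ ∃ K : ℝ, ∀ z : ℂ, 0 ≤ z.re → z.re ≤ 1 → ‖f z‖ ≤ K

namespace StripBounded

variable {E : Type*} [NormedAddCommGroup E] [NormedSpace ℂ E]

lemma const (c : E) : StripBounded fun _ : ℂ => c :=
  ⟨differentiable_const c, ‖c‖, fun _ _ _ => le_rfl⟩

lemma smul {f : ℂ → ℂ} {g : ℂ → E} (hf : StripBounded f) (hg : StripBounded g) :
    StripBounded fun z => f z • g z := by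
  obtain ⟨hf, K, hK⟩ := hf
  obtain ⟨hg, M, hM⟩ := hg
  refine ⟨hf.smul hg, K * M, fun z h0 h1 => ?_⟩
  rw [norm_smul]
  exact mul_le_mul (hK z h0 h1) (hM z h0 h1) (norm_nonneg _) ((norm_nonneg _).trans (hK z h0 h1))

lemma mul {f g : ℂ → ℂ} (hf : StripBounded f) (hg : StripBounded g) :
    StripBounded fun z => f z * g z :=
  hf.smul hg

lemma sum {α : Type*} (t : Finset α) {f : α → ℂ → E} (h : ∀ a, StripBounded (f a)) :
    StripBounded fun z => ∑ a ∈ t, f a z := by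
  choose hd K hK using h
  refine ⟨Differentiable.fun_sum fun a _ => hd a, ∑ a ∈ t, K a, fun z h0 h1 => ?_⟩
  exact (norm_sum_le _ _).trans (Finset.sum_le_sum fun a _ => hK a z h0 h1)

lemma comp_one_sub {f : ℂ → E} (hf : StripBounded f) : StripBounded fun z => f (1 - z) := by
  obtain ⟨hf, K, hK⟩ := hf
  refine ⟨hf.comp ((differentiable_const _).sub differentiable_id), K, fun z h0 h1 => ?_⟩
  exact hK _ (by simpa using h1) (by simpa using h0)

lemma ofReal_cpow {c : ℝ} (hc : 0 < c) (a : ℝ) :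
    StripBounded fun z : ℂ => (c : ℂ) ^ ((a : ℂ) * z) := by
  have hc' : (c : ℂ) ≠ 0 := by exact_mod_cast hc.ne'
  refine ⟨((differentiable_const _).mul differentiable_id).const_cpow (Or.inl hc'), ?_⟩
  have hcont : ContinuousOn (fun t : ℝ => c ^ (a * t)) (Set.Icc 0 1) :=
    (Real.continuous_const_rpow hc.ne' |>.comp (continuous_const.mul continuous_id)).continuousOn
  obtain ⟨K, hK⟩ := isCompact_Icc.bddAbove_image hcont
  refine ⟨K, fun z h0 h1 => ?_⟩
  rw [Complex.norm_cpow_eq_rpow_re_of_pos hc, Complex.re_ofReal_mul]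
  exact hK ⟨z.re, ⟨h0, h1⟩, rfl⟩

lemma matrix_mul {F : ℂ → Matrix ι κ ℂ} {G : ℂ → Matrix κ μ ℂ}
    (hF : ∀ i j, StripBounded fun z => F z i j) (hG : ∀ i j, StripBounded fun z => G z i j) (i : ι)
    (j : μ) : StripBounded fun z => (F z * G z) i j := by
  simp only [mul_apply]
  exact sum _ fun k => (hF i k).mul (hG k j)

lemma matrix_diagonal {d : ℂ → ι → ℂ} (hd : ∀ i, StripBounded fun z => d z i) (i j : ι) :
    StripBounded fun z => diagonal (d z) i j := by
  simp only [diagonal_apply]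
  split_ifs
  · exact hd i
  · exact const 0

lemma of_entries {F : ℂ → Matrix ι κ ℂ} (hF : ∀ i j, StripBounded fun z => F z i j) :
    StripBounded F := by
  have h : F = fun z => ∑ i, ∑ j, F z i j • Matrix.single i j (1 : ℂ) := by
    ext1 z
    conv_lhs => rw [matrix_eq_sum_single (F z)]
    simp [smul_single]
  rw [h]
  exact sum _ fun i => sum _ fun j => (hF i j).smul (const _)

open Complex.HadamardThreeLines in
lemma norm_le_one {f : ℂ → E} (hf : StripBounded f) (h0 : ∀ z : ℂ, z.re = 0 → ‖f z‖ ≤ 1)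
    (h1 : ∀ z : ℂ, z.re = 1 → ‖f z‖ ≤ 1) {z : ℂ} (hz0 : 0 ≤ z.re) (hz1 : z.re ≤ 1) :
    ‖f z‖ ≤ 1 := by
  obtain ⟨hd, K, hK⟩ := hf
  have h := norm_le_interp_of_mem_verticalClosedStrip₀₁' f (z := z) (a := 1) (b := 1) ⟨hz0, hz1⟩
    hd.diffContOnCl ⟨K, by rintro _ ⟨w, hw, rfl⟩; exact hK w hw.1 hw.2⟩ h0 h1
  simpa using h

end StripBounded

/-! ### The analytic family of a singular value decomposition -/

/-- The complex power of a singular value, vanishing at `0` for every exponent. -/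
def svPow (s : ℝ) (w : ℂ) : ℂ := if s = 0 then 0 else (s : ℂ) ^ w

lemma norm_svPow {s : ℝ} (hs : 0 ≤ s) (w : ℂ) : ‖svPow s w‖ = if s = 0 then 0 else s ^ w.re := by
  rw [svPow]
  split_ifs with h
  · simp
  · exact Complex.norm_cpow_eq_rpow_re_of_pos (lt_of_le_of_ne hs (Ne.symm h)) w

lemma svPow_add (s : ℝ) (v w : ℂ) : svPow s (v + w) = svPow s v * svPow s w := by
  rw [svPow, svPow, svPow]
  split_ifs with h
  · simp
  · exact Complex.cpow_add _ _ (by exact_mod_cast h)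

lemma svPow_mul_conj {s : ℝ} (hs : 0 ≤ s) {p : ℝ} (hp : p ≠ 0) {w : ℂ} (hw : w.re = p / 2) :
    svPow s w * starRingEnd ℂ (svPow s w) = ((s ^ p : ℝ) : ℂ) := by
  rw [Complex.mul_conj, Complex.normSq_eq_norm_sq, norm_svPow hs, hw]
  congr 1
  split_ifs with h
  · simp [h, Real.zero_rpow hp]
  · rw [← Real.rpow_natCast, ← Real.rpow_mul hs]
    congr 1
    push_cast
    ring

lemma stripBounded_svPow {s : ℝ} (hs : 0 ≤ s) (p : ℝ) : StripBounded fun z => svPow s (p * z) := by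
  by_cases h : s = 0
  · simp only [svPow, h, if_true]
    exact StripBounded.const 0
  · simp only [svPow, h, if_false]
    exact StripBounded.ofReal_cpow (lt_of_le_of_ne hs (Ne.symm h)) p

lemma stripBounded_hpow {A : Matrix ι ι ℂ} (hA : A.PosDef) (i j : ι) :
    StripBounded fun z => hpow hA.isHermitian (-z / 2) i j := by
  set W := (hA.isHermitian.eigenvectorUnitary : Matrix ι ι ℂ) with hW
  have hd : ∀ k, StripBounded fun z => (hA.isHermitian.eigenvalues k : ℂ) ^ (-z / 2) := fun k => by
    convert StripBounded.ofReal_cpow (hA.eigenvalues_pos k) (-1 / 2) using 3 with z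
    push_cast
    ring
  have h1 := StripBounded.matrix_mul (F := fun _ => W) (fun _ _ => StripBounded.const _)
    (StripBounded.matrix_diagonal
      (d := fun z k => (hA.isHermitian.eigenvalues k : ℂ) ^ (-z / 2)) hd)
  simp only [hpow, ← hW]
  exact StripBounded.matrix_mul (F := fun z => W * diagonal fun k =>
    (hA.isHermitian.eigenvalues k : ℂ) ^ (-z / 2)) (G := fun _ => Wᴴ) h1
    (fun _ _ => StripBounded.const _) i j

/-- The family `(L ^ (-z/2) ⊗ 1) U diag(s ^ (p z)) Vᴴ (R ^ (-z/2) ⊗ 1)`. -/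
def family (U V : Matrix (ι × κ) (ι × κ) ℂ) (s : ι × κ → ℝ) (p : ℝ) {L R : Matrix ι ι ℂ}
    (hL : L.IsHermitian) (hR : R.IsHermitian) (z : ℂ) : Matrix (ι × κ) (ι × κ) ℂ :=
  (hpow hL (-z / 2) ⊗ₖ (1 : Matrix κ κ ℂ)) * U * diagonal (fun i => svPow (s i) (p * z)) * Vᴴ *
    (hpow hR (-z / 2) ⊗ₖ (1 : Matrix κ κ ℂ))

lemma stripBounded_family {U V : Matrix (ι × κ) (ι × κ) ℂ} {s : ι × κ → ℝ} (hs : ∀ i, 0 ≤ s i)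
    (p : ℝ) {L R : Matrix ι ι ℂ} (hL : L.PosDef) (hR : R.PosDef) (i j : ι × κ) :
    StripBounded fun z => family U V s p hL.isHermitian hR.isHermitian z i j := by
  have hk : ∀ {L : Matrix ι ι ℂ} (hL : L.PosDef) (i j : ι × κ), StripBounded fun z =>
      (hpow hL.isHermitian (-z / 2) ⊗ₖ (1 : Matrix κ κ ℂ)) i j := fun hL i j =>
    (stripBounded_hpow hL i.1 j.1).mul (StripBounded.const _)
  have h1 := StripBounded.matrix_mul (G := fun _ => U) (hk hL) fun _ _ => StripBounded.const _
  have h2 := StripBounded.matrix_mul h1 (StripBounded.matrix_diagonal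
    (d := fun z k => svPow (s k) (p * z)) fun k => stripBounded_svPow (hs k) p)
  have h3 := StripBounded.matrix_mul (G := fun _ => Vᴴ) h2 fun _ _ => StripBounded.const _
  simp only [family]
  exact StripBounded.matrix_mul h3 (hk hR) i j

lemma norm_family_le_one {x U V : Matrix (ι × κ) (ι × κ) ℂ} {s : ι × κ → ℝ} (h : IsSVD x U V s)
    (p : ℝ) {L R : Matrix ι ι ℂ} (hL : L.PosDef) (hR : R.PosDef) {z : ℂ} (hz : z.re = 0) :
    ‖family U V s p hL.isHermitian hR.isHermitian z‖ ≤ 1 := by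
  have hz2 : (-z / 2).re = 0 := by simp [hz]
  refine norm_mul_le_one (norm_mul_le_one (norm_mul_le_one (norm_mul_le_one
    (norm_kronecker_one_le_one (norm_hpow_le_one hL hz2)) h.norm_left)
    (norm_diagonal_le_one fun i => ?_)) ?_) (norm_kronecker_one_le_one (norm_hpow_le_one hR hz2))
  · rw [norm_svPow (h.nonneg i), Complex.re_ofReal_mul, hz]
    split_ifs <;> simp
  · rw [l2_opNorm_conjTranspose]
    exact h.norm_right

lemma norm_contr_family_le_one {x U V : Matrix (ι × κ) (ι × κ) ℂ} {s : ι × κ → ℝ}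
    (h : IsSVD x U V s) {p ε : ℝ} (hp : p ≠ 0) (hε : 0 < ε) (hL : (marginal U s p ε).PosDef)
    (hR : (marginal V s p ε).PosDef) {z : ℂ} (hz : z.re = 1) {w : Matrix (μ × κ) (μ × κ) ℂ}
    (hw : ‖w‖ ≤ 1) : ‖contr (family U V s p hL.isHermitian hR.isHermitian z) w‖ ≤ 1 := by
  set A := (hpow hL.isHermitian (-z / 2) ⊗ₖ (1 : Matrix κ κ ℂ)) * U *
    diagonal fun i => svPow (s i) ((p / 2 : ℝ) : ℂ) with hA
  set B := (hpow hR.isHermitian (starRingEnd ℂ (-z / 2)) ⊗ₖ (1 : Matrix κ κ ℂ)) * V *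
    diagonal fun i => starRingEnd ℂ (svPow (s i) (p * z - (p / 2 : ℝ))) with hB
  have hAB : family U V s p hL.isHermitian hR.isHermitian z = A * Bᴴ := by
    have hd : (diagonal fun i => starRingEnd ℂ (svPow (s i) (p * z - (p / 2 : ℝ))))ᴴ =
        diagonal fun i => svPow (s i) (p * z - (p / 2 : ℝ)) := by
      rw [diagonal_conjTranspose]
      congr 1
      ext i
      simp
    have hdd : (diagonal fun i => svPow (s i) (p * z)) =
        (diagonal fun i => svPow (s i) ((p / 2 : ℝ) : ℂ)) *
          diagonal fun i => svPow (s i) (p * z - (p / 2 : ℝ)) := by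
      rw [diagonal_mul_diagonal]
      congr 1
      ext i
      rw [← svPow_add, add_sub_cancel]
    rw [hA, hB, family, conjTranspose_mul, conjTranspose_mul, hd, conjTranspose_kronecker,
      conjTranspose_one, hpow_conjTranspose hR, Complex.conj_conj, hdd]
    simp only [Matrix.mul_assoc]
  have hpsd : ∀ H : Matrix ι ι ℂ, ((ε : ℂ) • (H * Hᴴ)).PosSemidef := fun H =>
    (posSemidef_self_mul_conjTranspose H).smul (Complex.zero_le_real.2 hε.le)
  have hz1 : (-z / 2).re = -1 / 2 := by simp [hz]
  have hz2 : (starRingEnd ℂ (-z / 2)).re = -1 / 2 := by rw [Complex.conj_re, hz1]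
  rw [hAB]
  refine norm_contr_le_one (ptr_marginal_normalized hL hz1 fun i => ?_) (hpsd _)
    (ptr_marginal_normalized hR hz2 fun i => ?_) (hpsd _) hw
  · exact svPow_mul_conj (h.nonneg i) hp (Complex.ofReal_re _)
  · rw [Complex.conj_conj, mul_comm]
    refine svPow_mul_conj (h.nonneg i) hp ?_
    rw [Complex.sub_re, Complex.re_ofReal_mul, hz, Complex.ofReal_re]
    ring

/-- Interpolation between `M_ι[M_κ] × M_μ[S_1^κ]` and `M_ι[S_1^κ] × M_μ[M_κ]`. -/
lemma norm_contr_family_family_le_one {x U V : Matrix (ι × κ) (ι × κ) ℂ} {s : ι × κ → ℝ}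
    {x' U' V' : Matrix (μ × κ) (μ × κ) ℂ} {s' : μ × κ → ℝ}
    (h : IsSVD x U V s) (h' : IsSVD x' U' V' s') {p ε : ℝ} (hp : p ≠ 0) (hε : 0 < ε)
    (hL : (marginal U s p ε).PosDef) (hR : (marginal V s p ε).PosDef)
    (hL' : (marginal U' s' p ε).PosDef) (hR' : (marginal V' s' p ε).PosDef)
    {z : ℂ} (hz0 : 0 ≤ z.re) (hz1 : z.re ≤ 1) :
    ‖contr (family U V s p hL.isHermitian hR.isHermitian z)
      (family U' V' s' p hL'.isHermitian hR'.isHermitian (1 - z))‖ ≤ 1 := by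
  have hF : StripBounded fun z => contr (family U V s p hL.isHermitian hR.isHermitian z)
      (family U' V' s' p hL'.isHermitian hR'.isHermitian (1 - z)) :=
    StripBounded.of_entries fun i j => StripBounded.sum _ fun k => StripBounded.sum _ fun l =>
      (stripBounded_family h.nonneg p hL hR _ _).mul
        (stripBounded_family h'.nonneg p hL' hR' _ _).comp_one_sub
  refine hF.norm_le_one (fun z hz => ?_) (fun z hz => ?_) hz0 hz1
  · rw [contr_comm]
    exact norm_submatrix_equiv_le_one _ (norm_contr_family_le_one h' hp hε hL' hR' (by simp [hz])
      (norm_family_le_one h p hL hR hz))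
  · exact norm_contr_family_le_one h hp hε hL hR hz
      (norm_family_le_one h' p hL' hR' (by simp [hz]))

lemma family_mul_cancel {U V : Matrix (ι × κ) (ι × κ) ℂ} {s : ι × κ → ℝ} {p : ℝ}
    {L R : Matrix ι ι ℂ} (hL : L.PosDef) (hR : R.PosDef) (z : ℂ) :
    (hpow hL.isHermitian (z / 2) ⊗ₖ (1 : Matrix κ κ ℂ)) *
        family U V s p hL.isHermitian hR.isHermitian z *
        (hpow hR.isHermitian (z / 2) ⊗ₖ (1 : Matrix κ κ ℂ)) =
      U * diagonal (fun i => svPow (s i) (p * z)) * Vᴴ := by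
  have h1 : (hpow hL.isHermitian (z / 2) ⊗ₖ (1 : Matrix κ κ ℂ)) *
      (hpow hL.isHermitian (-z / 2) ⊗ₖ (1 : Matrix κ κ ℂ)) = 1 := by
    rw [← mul_kronecker_mul, hpow_mul_hpow hL, ← add_div, add_neg_cancel, zero_div, hpow_zero hL,
      Matrix.one_mul, one_kronecker_one]
  have h2 : (hpow hR.isHermitian (-z / 2) ⊗ₖ (1 : Matrix κ κ ℂ)) *
      (hpow hR.isHermitian (z / 2) ⊗ₖ (1 : Matrix κ κ ℂ)) = 1 := by
    rw [← mul_kronecker_mul, hpow_mul_hpow hR, ← add_div, neg_add_cancel, zero_div, hpow_zero hR,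
      Matrix.one_mul, one_kronecker_one]
  rw [family]
  simp only [Matrix.mul_assoc]
  rw [h2, Matrix.mul_one, ← Matrix.mul_assoc, h1, Matrix.one_mul]

/-! ### Hilbert–Schmidt estimates -/

lemma sum_mul_rpow_le {a : ι → ℝ} {l : κ → ℝ} {k : ι → κ → ℝ} {p : ℝ} (hp : 1 ≤ p)
    (ha : ∀ r, 0 ≤ a r) (hl : ∀ c, 0 < l c) (hk : ∀ r c, 0 ≤ k r c) (hrow : ∀ r, ∑ c, k r c ≤ 1)
    (hcol : ∀ c, ∑ r, k r c ≤ 1) :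
    ∑ r, ∑ c, a r * l c ^ (1 - 1 / p) * k r c ≤
      (∑ r, a r ^ p) ^ (1 / p) * (∑ c, l c) ^ (1 - 1 / p) := by
  have hp0 : 0 < p := by linarith
  have hθ0 : 0 ≤ 1 / p := by positivity
  have hθ1 : 0 ≤ 1 - 1 / p := sub_nonneg.2 ((div_le_one hp0).2 hp)
  set A := ∑ r, a r ^ p with hA
  set S := ∑ c, l c with hS
  have hap : ∀ r, 0 ≤ a r ^ p := fun r => Real.rpow_nonneg (ha r) p
  have hA0 : 0 ≤ A := Finset.sum_nonneg fun r _ => hap r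
  have hS0 : 0 ≤ S := Finset.sum_nonneg fun c _ => (hl c).le
  have hrhs : 0 ≤ A ^ (1 / p) * S ^ (1 - 1 / p) := by positivity
  rcases hA0.eq_or_lt with hA1 | hA1
  · have h0 : ∀ r, a r = 0 := fun r => by
      have h1 := (Finset.sum_eq_zero_iff_of_nonneg fun r _ => hap r).1 hA1.symm r
        (Finset.mem_univ r)
      exact (Real.rpow_eq_zero (ha r) hp0.ne').1 h1
    simpa [h0] using hrhs
  rcases isEmpty_or_nonempty κ with hκ | hκ
  · simpa using hrhs
  have hS1 : 0 < S := Finset.sum_pos (fun c _ => hl c) Finset.univ_nonempty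
  have hterm : ∀ r c, a r * l c ^ (1 - 1 / p) * k r c ≤ A ^ (1 / p) * S ^ (1 - 1 / p) *
      (1 / p * (a r ^ p / A * k r c) + (1 - 1 / p) * (l c / S * k r c)) := fun r c => by
    have h1 := Real.geom_mean_le_arith_mean2_weighted hθ0 hθ1 (div_nonneg (hap r) hA0)
      (div_nonneg (hl c).le hS0) (by ring)
    rw [Real.div_rpow (hap r) hA0, Real.div_rpow (hl c).le hS0, ← Real.rpow_mul (ha r),
      mul_one_div_cancel hp0.ne', Real.rpow_one] at h1
    have hA2 : 0 < A ^ (1 / p) := Real.rpow_pos_of_pos hA1 _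
    have hS2 : 0 < S ^ (1 - 1 / p) := Real.rpow_pos_of_pos hS1 _
    rw [div_mul_div_comm, div_le_iff₀ (mul_pos hA2 hS2)] at h1
    calc _ ≤ _ := mul_le_mul_of_nonneg_right h1 (hk r c)
      _ = _ := by ring
  have hsum1 : ∑ r, ∑ c, a r ^ p / A * k r c ≤ 1 := by
    calc _ ≤ ∑ r, a r ^ p / A := Finset.sum_le_sum fun r _ => by
          rw [← Finset.mul_sum]
          exact mul_le_of_le_one_right (div_nonneg (hap r) hA0) (hrow r)
      _ = 1 := by rw [← Finset.sum_div, div_self hA1.ne']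
  have hsum2 : ∑ r, ∑ c, l c / S * k r c ≤ 1 := by
    rw [Finset.sum_comm]
    calc _ ≤ ∑ c, l c / S := Finset.sum_le_sum fun c _ => by
          rw [← Finset.mul_sum]
          exact mul_le_of_le_one_right (div_nonneg (hl c).le hS0) (hcol c)
      _ = 1 := by rw [← Finset.sum_div, div_self hS1.ne']
  calc _ ≤ _ := Finset.sum_le_sum fun r _ => Finset.sum_le_sum fun c _ => hterm r c
    _ = A ^ (1 / p) * S ^ (1 - 1 / p) * (1 / p * ∑ r, ∑ c, a r ^ p / A * k r c +
        (1 - 1 / p) * ∑ r, ∑ c, l c / S * k r c) := by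
      simp only [Finset.mul_sum, mul_add, Finset.sum_add_distrib]
    _ ≤ A ^ (1 / p) * S ^ (1 - 1 / p) * 1 := by
      refine mul_le_mul_of_nonneg_left ?_ hrhs
      nlinarith [mul_le_of_le_one_right hθ0 hsum1, mul_le_of_le_one_right hθ1 hsum2]
    _ = _ := mul_one _

lemma sum_norm_sq_le {A B D : Matrix ι ι ℂ} (hA : ‖A‖ ≤ 1) (hB : ‖B‖ ≤ 1) (hD : ‖D‖ ≤ 1)
    {s l : ι → ℝ} (hs : ∀ i, 0 ≤ s i) (hl : ∀ i, 0 < l i) {p : ℝ} (hp : 1 ≤ p) {t : ι → ℂ}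
    (ht : ∀ i, ‖t i‖ ^ 2 = l i ^ (1 - 1 / p)) :
    ∑ i, ∑ j, ‖(A * (diagonal (fun i => (s i : ℂ)) * B * diagonal t) * D) i j‖ ^ 2 ≤
      (∑ i, s i ^ (2 * p)) ^ (1 / p) * (∑ i, l i) ^ (1 - 1 / p) := by
  refine (sum_norm_sq_mul_right_le hD _).trans ((sum_norm_sq_mul_left_le hA _).trans ?_)
  have h := sum_mul_rpow_le (a := fun i => s i ^ 2) (k := fun i j => ‖B i j‖ ^ 2) hp
    (fun i => sq_nonneg _) hl (fun i j => sq_nonneg _) (sum_norm_sq_row_le_one hB)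
    (sum_norm_sq_col_le_one hB)
  have e : ∀ i, (s i ^ 2) ^ p = s i ^ (2 * p) := fun i => by
    rw [← Real.rpow_natCast, ← Real.rpow_mul (hs i)]
    norm_num
  simp only [e] at h
  refine le_of_eq_of_le (Finset.sum_congr rfl fun i _ => Finset.sum_congr rfl fun j _ => ?_) h
  rw [mul_diagonal, diagonal_mul, norm_mul, norm_mul, Complex.norm_real, mul_pow, mul_pow, ht,
    Real.norm_of_nonneg (hs i)]
  ring

lemma norm_conjTranspose_le_one {A : Matrix ι κ ℂ} (h : ‖A‖ ≤ 1) : ‖Aᴴ‖ ≤ 1 := by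
  rwa [l2_opNorm_conjTranspose]

lemma exists_isSVD_two_mul {p : ℝ≥0∞} (hp : 1 ≤ p) (hpt : p ≠ ∞) (a : Matrix ι ι ℂ) :
    ∃ (U V : Matrix ι ι ℂ) (s : ι → ℝ), IsSVD a U V s ∧
      schattenNorm (2 * p) a ^ 2 = (∑ i, s i ^ (2 * p.toReal)) ^ (1 / p.toReal) := by
  have hp0 : 0 < p.toReal := ENNReal.toReal_pos (by positivity) hpt
  obtain ⟨U, V, s, h, hs⟩ := exists_isSVD_schattenNorm (p := 2 * p)
    (ENNReal.mul_ne_top (by simp) hpt) a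
  have h2 : (2 * p).toReal = 2 * p.toReal := by simp
  refine ⟨U, V, s, h, ?_⟩
  rw [hs, h2, ← Real.rpow_natCast, ← Real.rpow_mul
    (Finset.sum_nonneg fun i _ => Real.rpow_nonneg (h.nonneg i) _)]
  congr 1
  push_cast
  field_simp

lemma norm_cpow_sq {r : ℝ} (hr : 0 < r) {z : ℂ} {q : ℝ} (hz : z.re = q / 2) :
    ‖(r : ℂ) ^ z‖ ^ 2 = r ^ q := by
  rw [Complex.norm_cpow_eq_rpow_re_of_pos hr, hz, ← Real.rpow_natCast, ← Real.rpow_mul hr.le]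
  congr 1
  push_cast
  ring

lemma sum_eigenvalues {A : Matrix ι ι ℂ} (hA : A.IsHermitian) :
    ∑ i, hA.eigenvalues i = A.trace.re := by
  simp [hA.trace_eq_sum_eigenvalues]

lemma sum_norm_sq_transpose_mul_hpow_le {A : Matrix ι ι ℂ} (hA : A.PosDef) {p : ℝ≥0∞} (hp : 1 ≤ p)
    (hpt : p ≠ ∞) (a : Matrix ι ι ℂ) {z : ℂ} (hz : z.re = (1 - 1 / p.toReal) / 2) :
    ∑ i, ∑ j, ‖(aᵀ * hpow hA.isHermitian z) i j‖ ^ 2 ≤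
      schattenNorm (2 * p) a ^ 2 * A.trace.re ^ (1 - 1 / p.toReal) := by
  have hp1 : 1 ≤ p.toReal := by simpa using ENNReal.toReal_mono hpt hp
  obtain ⟨U, V, s, h, hs⟩ := exists_isSVD_two_mul hp hpt a
  have hW := norm_eigenvectorUnitary_le hA.isHermitian
  have key := sum_norm_sq_le (norm_transpose_le_one (norm_conjTranspose_le_one h.norm_right))
    (norm_mul_le_one (norm_transpose_le_one h.norm_left) hW) (norm_conjTranspose_le_one hW)
    h.nonneg hA.eigenvalues_pos hp1 fun i => norm_cpow_sq (hA.eigenvalues_pos i) hz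
  rw [← hs, sum_eigenvalues] at key
  refine le_of_eq_of_le ?_ key
  rw [h.eq]
  simp only [hpow, transpose_mul, diagonal_transpose, Matrix.mul_assoc]

lemma sum_norm_sq_mul_transpose_hpow_le {A : Matrix ι ι ℂ} (hA : A.PosDef) {p : ℝ≥0∞} (hp : 1 ≤ p)
    (hpt : p ≠ ∞) (a : Matrix ι ι ℂ) {z : ℂ} (hz : z.re = (1 - 1 / p.toReal) / 2) :
    ∑ i, ∑ j, ‖(a * (hpow hA.isHermitian z)ᵀ) i j‖ ^ 2 ≤
      schattenNorm (2 * p) a ^ 2 * A.trace.re ^ (1 - 1 / p.toReal) := by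
  have hp1 : 1 ≤ p.toReal := by simpa using ENNReal.toReal_mono hpt hp
  obtain ⟨U, V, s, h, hs⟩ := exists_isSVD_two_mul hp hpt a
  have hW := norm_eigenvectorUnitary_le hA.isHermitian
  have key := sum_norm_sq_le h.norm_left (norm_mul_le_one (norm_conjTranspose_le_one h.norm_right)
    (norm_transpose_le_one (norm_conjTranspose_le_one hW))) (norm_transpose_le_one hW)
    h.nonneg hA.eigenvalues_pos hp1 fun i => norm_cpow_sq (hA.eigenvalues_pos i) hz
  rw [← hs, sum_eigenvalues] at key
  refine le_of_eq_of_le ?_ key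
  rw [h.eq]
  simp only [hpow, transpose_mul, diagonal_transpose, Matrix.mul_assoc]

/-! ### The duality pairing -/

/-- The vector `∑ i, e_i ⊗ e_i`. -/
def diagVec (ι : Type) [DecidableEq ι] : ι × ι → ℂ := fun a => if a.1 = a.2 then 1 else 0

lemma diagVec_dotProduct (f : ι × ι → ℂ) : diagVec ι ⬝ᵥ f = ∑ i, f (i, i) := by
  simp [diagVec, dotProduct, Fintype.sum_prod_type]

lemma dotProduct_diagVec (f : ι × ι → ℂ) : f ⬝ᵥ diagVec ι = ∑ i, f (i, i) := by
  rw [dotProduct_comm, diagVec_dotProduct]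

lemma diagVec_vecMul_kronecker (a α : Matrix ι ι ℂ) (i j : ι) :
    (diagVec ι ᵥ* (a ⊗ₖ α)) (i, j) = (aᵀ * α) i j := by
  rw [vecMul, diagVec_dotProduct, mul_apply]
  rfl

lemma kronecker_mulVec_diagVec (b β : Matrix ι ι ℂ) (i j : ι) :
    ((b ⊗ₖ β) *ᵥ diagVec ι) (i, j) = (b * βᵀ) i j := by
  rw [mulVec, dotProduct_diagVec, mul_apply]
  rfl

lemma diagVec_dotProduct_contr (v w : Matrix (ι × κ) (ι × κ) ℂ) :
    diagVec ι ⬝ᵥ (contr v w *ᵥ diagVec ι) = (v * wᵀ).trace := by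
  rw [diagVec_dotProduct]
  simp only [mulVec, dotProduct_diagVec, contr, of_apply, trace, diag_apply, mul_apply,
    transpose_apply, Fintype.sum_prod_type]
  refine Finset.sum_congr rfl fun i _ => ?_
  rw [Finset.sum_comm]

lemma one_kronecker_mul_contr (α β : Matrix μ μ ℂ) (y : Matrix (ι × κ) (ι × κ) ℂ)
    (w : Matrix (μ × κ) (μ × κ) ℂ) :
    contr y ((α ⊗ₖ (1 : Matrix κ κ ℂ)) * w * (β ⊗ₖ (1 : Matrix κ κ ℂ))) =
      ((1 : Matrix ι ι ℂ) ⊗ₖ α) * contr y w * ((1 : Matrix ι ι ℂ) ⊗ₖ β) := by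
  have hswap : ∀ γ : Matrix μ μ ℂ, (1 : Matrix ι ι ℂ) ⊗ₖ γ =
      (γ ⊗ₖ (1 : Matrix ι ι ℂ)).submatrix (Equiv.prodComm ι μ) (Equiv.prodComm ι μ) := fun γ => by
    ext a b
    exact mul_comm _ _
  rw [contr_comm, contr_mul_kronecker_one, contr_kronecker_one_mul, contr_comm y w, hswap, hswap,
    submatrix_mul_equiv, submatrix_mul_equiv]

lemma trace_mul_transpose_eq_sum {x U V : Matrix ι ι ℂ} {s : ι → ℝ} (h : IsSVD x U V s) {p : ℝ}
    (hp : p ≠ 0) {z : ℂ} (hz : z = ((p - 1 : ℝ) : ℂ)) :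
    (x * (U.map (starRingEnd ℂ) * diagonal (fun i => svPow (s i) z) *
      (V.map (starRingEnd ℂ))ᴴ)ᵀ).trace = ((∑ i, s i ^ p : ℝ) : ℂ) := by
  have hV : (V.map (starRingEnd ℂ))ᴴᵀ = V := by ext i j; simp
  have hU : (U.map (starRingEnd ℂ))ᵀ = Uᴴ := rfl
  have hcancel : ∀ {X : Matrix ι ι ℂ} {d : ι → ℂ},
      (∀ i j, s j ≠ 0 → (Xᴴ * X) i j = (1 : Matrix ι ι ℂ) i j) → (∀ i, s i = 0 → d i = 0) →
      Xᴴ * X * diagonal d = diagonal d := fun {X d} hX hd => by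
    ext i j
    rw [mul_diagonal]
    by_cases hj : s j = 0
    · rw [hd j hj, mul_zero, diagonal_apply]
      split_ifs with hij
      · rw [hij, hd j hj]
      · rfl
    · rw [hX i j hj, one_apply, diagonal_apply]
      split_ifs with hij
      · rw [hij, one_mul]
      · rw [zero_mul]
  rw [transpose_mul, transpose_mul, hV, hU, diagonal_transpose, h.eq]
  calc _ = (Uᴴ * U * diagonal (fun i => (s i : ℂ)) *
        (Vᴴ * V * diagonal fun i => svPow (s i) z)).trace := by
        rw [← Matrix.mul_assoc, ← Matrix.mul_assoc, trace_mul_comm]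
        simp only [Matrix.mul_assoc]
    _ = _ := by
      rw [hcancel h.left (by simp), hcancel h.right (by simp +contextual [svPow]),
        diagonal_mul_diagonal, trace_diagonal]
      push_cast
      refine Finset.sum_congr rfl fun i _ => ?_
      rw [svPow, hz]
      split_ifs with hi
      · simp [hi, Real.zero_rpow hp]
      · have hi0 : 0 < s i := lt_of_le_of_ne (h.nonneg i) (Ne.symm hi)
        rw [← Complex.ofReal_cpow hi0.le, ← Complex.ofReal_mul, Real.rpow_sub hi0, Real.rpow_one,
          mul_div_cancel₀ _ hi]

/-! ### Bounds for Pisier's norm -/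

section pisierNorm

variable {N m n : ℕ} {p : ℝ≥0∞}

lemma pisierNorm_le {x y : Matrix (Fin N × Fin n) (Fin N × Fin n) ℂ}
    (a b : Matrix (Fin N) (Fin N) ℂ)
    (h : x = (a ⊗ₖ (1 : Matrix (Fin n) (Fin n) ℂ)) * y * (b ⊗ₖ (1 : Matrix (Fin n) (Fin n) ℂ))) :
    pisierNorm p x ≤ schattenNorm (2 * p) a * ‖y‖ * schattenNorm (2 * p) b := by
  refine csInf_le ⟨0, ?_⟩ ⟨a, b, y, h, rfl⟩
  rintro _ ⟨a, b, y, -, rfl⟩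
  exact mul_nonneg (mul_nonneg (schattenNorm_nonneg _ _) (norm_nonneg _)) (schattenNorm_nonneg _ _)

lemma le_pisierNorm_mul {x : Matrix (Fin N × Fin n) (Fin N × Fin n) ℂ} {X K : ℝ} (hK : 0 ≤ K)
    (h : ∀ (a b : Matrix (Fin N) (Fin N) ℂ) (y : Matrix (Fin N × Fin n) (Fin N × Fin n) ℂ),
      x = (a ⊗ₖ (1 : Matrix (Fin n) (Fin n) ℂ)) * y * (b ⊗ₖ (1 : Matrix (Fin n) (Fin n) ℂ)) →
      X ≤ schattenNorm (2 * p) a * ‖y‖ * schattenNorm (2 * p) b * K) :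
    X ≤ pisierNorm p x * K := by
  have htriv : x = ((1 : Matrix (Fin N) (Fin N) ℂ) ⊗ₖ (1 : Matrix (Fin n) (Fin n) ℂ)) * x *
      ((1 : Matrix (Fin N) (Fin N) ℂ) ⊗ₖ (1 : Matrix (Fin n) (Fin n) ℂ)) := by
    rw [one_kronecker_one, Matrix.one_mul, Matrix.mul_one]
  rcases hK.eq_or_lt with hK0 | hK0
  · simpa [← hK0] using h 1 1 x htriv
  · rw [← div_le_iff₀ hK0]
    refine le_csInf ⟨_, 1, 1, x, htriv, rfl⟩ ?_
    rintro _ ⟨a, b, y, hy, rfl⟩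
    rw [div_le_iff₀ hK0]
    exact h a b y hy

lemma pisierNorm_nonneg (x : Matrix (Fin N × Fin n) (Fin N × Fin n) ℂ) : 0 ≤ pisierNorm p x := by
  have h := le_pisierNorm_mul (p := p) (x := x) (X := 0) zero_le_one fun a b y _ =>
    mul_nonneg (mul_nonneg (mul_nonneg (schattenNorm_nonneg _ _) (norm_nonneg _))
      (schattenNorm_nonneg _ _)) zero_le_one
  simpa using h

lemma pisierNorm_contr_family_le (hp : 1 ≤ p) (hpt : p ≠ ∞)
    {x U V : Matrix (Fin N × Fin n) (Fin N × Fin n) ℂ} {s : Fin N × Fin n → ℝ}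
    {x' U' V' : Matrix (Fin m × Fin n) (Fin m × Fin n) ℂ} {s' : Fin m × Fin n → ℝ}
    (h : IsSVD x U V s) (h' : IsSVD x' U' V' s') {ε : ℝ} (hε : 0 < ε)
    (hL' : (marginal U' s' p.toReal ε).PosDef) (hR' : (marginal V' s' p.toReal ε).PosDef) :
    pisierNorm p (contr x (family U' V' s' p.toReal hL'.isHermitian hR'.isHermitian
        (1 - ((1 / p.toReal : ℝ) : ℂ)))) ≤
      (∑ i, s i ^ p.toReal + N * ε) ^ (1 / p.toReal) := by
  have hp0 : 0 < p.toReal := ENNReal.toReal_pos (by positivity) hpt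
  have hp1 : 1 ≤ p.toReal := by simpa using ENNReal.toReal_mono hpt hp
  have hL : (marginal U s p.toReal ε).PosDef := marginal_posDef h.nonneg hε
  have hR : (marginal V s p.toReal ε).PosDef := marginal_posDef h.nonneg hε
  set w := family U' V' s' p.toReal hL'.isHermitian hR'.isHermitian (1 - ((1 / p.toReal : ℝ) : ℂ))
  have hcast : (((1 / p.toReal : ℝ) : ℂ)) / 2 = ((1 / p.toReal / 2 : ℝ) : ℂ) := by push_cast; rfl
  have hx := family_mul_cancel (U := U) (V := V) (s := s) (p := p.toReal) hL hR
    ((1 / p.toReal : ℝ) : ℂ)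
  have hsv : ∀ i, svPow (s i) ((p.toReal : ℂ) * ((1 / p.toReal : ℝ) : ℂ)) = s i := fun i => by
    rw [← Complex.ofReal_mul, mul_one_div_cancel hp0.ne', svPow, Complex.ofReal_one,
      Complex.cpow_one]
    split_ifs with hi <;> simp [hi]
  simp only [hsv] at hx
  rw [← h.eq, hcast] at hx
  have hw := pisierNorm_le (p := p) _ _
    ((congrArg (contr · w) hx.symm).trans (contr_mul_kronecker_one _ _ _) |>.trans
      (congrArg (· * _) (contr_kronecker_one_mul _ _ _)))
  refine hw.trans ?_
  rw [schattenNorm_hpow hL hp hpt, schattenNorm_hpow hR hp hpt, trace_marginal hp0.ne' h.left,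
    trace_marginal hp0.ne' h.right, Fintype.card_fin]
  have hnorm := norm_contr_family_family_le_one h h' hp0.ne' hε hL hR hL' hR'
    (z := ((1 / p.toReal : ℝ) : ℂ)) (by rw [Complex.ofReal_re]; positivity)
    (by rw [Complex.ofReal_re]; exact (div_le_one hp0).2 hp1)
  have hP : 0 ≤ ∑ i, s i ^ p.toReal + N * ε :=
    add_nonneg (Finset.sum_nonneg fun i _ => Real.rpow_nonneg (h.nonneg i) _) (by positivity)
  set P := ∑ i, s i ^ p.toReal + N * ε
  have hPP : P ^ (1 / p.toReal) = P ^ (1 / p.toReal / 2) * P ^ (1 / p.toReal / 2) := by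
    rw [← Real.rpow_add_of_nonneg hP (by positivity) (by positivity), add_halves]
  rw [hPP]
  refine mul_le_mul_of_nonneg_right (mul_le_of_le_one_right ?_ hnorm) ?_ <;>
  exact Real.rpow_nonneg hP _

lemma le_pisierNorm_contr_family_mul (hp : 1 ≤ p) (hpt : p ≠ ∞)
    {v U V : Matrix (Fin m × Fin n) (Fin m × Fin n) ℂ} {s : Fin m × Fin n → ℝ}
    (h : IsSVD v U V s) {ε : ℝ} (hε : 0 < ε)
    (hL : (marginal (U.map (starRingEnd ℂ)) s p.toReal ε).PosDef)
    (hR : (marginal (V.map (starRingEnd ℂ)) s p.toReal ε).PosDef) :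
    ∑ i, s i ^ p.toReal ≤ pisierNorm p (contr v (family (U.map (starRingEnd ℂ))
        (V.map (starRingEnd ℂ)) s p.toReal hL.isHermitian hR.isHermitian
        (1 - ((1 / p.toReal : ℝ) : ℂ)))) *
      (∑ i, s i ^ p.toReal + m * ε) ^ (1 - 1 / p.toReal) := by
  have hp0 : 0 < p.toReal := ENNReal.toReal_pos (by positivity) hpt
  have hP0 : 0 ≤ ∑ i, s i ^ p.toReal := Finset.sum_nonneg fun i _ => Real.rpow_nonneg (h.nonneg i) _
  have hP : 0 ≤ ∑ i, s i ^ p.toReal + m * ε := add_nonneg hP0 (by positivity)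
  set z : ℂ := 1 - ((1 / p.toReal : ℝ) : ℂ) with hzdef
  have hz : (z / 2).re = (1 - 1 / p.toReal) / 2 := by
    have e : z / 2 = (((1 - 1 / p.toReal) / 2 : ℝ) : ℂ) := by rw [hzdef]; push_cast; rfl
    rw [e, Complex.ofReal_re]
  have hpz : (p.toReal : ℂ) * z = ((p.toReal - 1 : ℝ) : ℂ) := by
    rw [hzdef, ← Complex.ofReal_one, ← Complex.ofReal_sub, ← Complex.ofReal_mul]
    congr 1
    field_simp
  refine le_pisierNorm_mul (Real.rpow_nonneg hP _) fun a b y hy => ?_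
  have htr := trace_mul_transpose_eq_sum h hp0.ne' hpz
  have hα := sum_norm_sq_transpose_mul_hpow_le hL hp hpt a hz
  have hβ := sum_norm_sq_mul_transpose_hpow_le hR hp hpt b hz
  rw [trace_marginal hp0.ne' h.map_conj.left, Fintype.card_fin] at hα
  rw [trace_marginal hp0.ne' h.map_conj.right, Fintype.card_fin] at hβ
  rw [← family_mul_cancel hL hR, ← diagVec_dotProduct_contr, one_kronecker_mul_contr, hy] at htr
  set α := hpow hL.isHermitian (z / 2)
  set β := hpow hR.isHermitian (z / 2)
  set P := ∑ i, s i ^ p.toReal + m * ε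
  have hfac : ((1 : Matrix (Fin m) (Fin m) ℂ) ⊗ₖ α) * ((a ⊗ₖ (1 : Matrix (Fin m) (Fin m) ℂ)) * y *
      (b ⊗ₖ (1 : Matrix (Fin m) (Fin m) ℂ))) * ((1 : Matrix (Fin m) (Fin m) ℂ) ⊗ₖ β) =
      (a ⊗ₖ α) * (y * (b ⊗ₖ β)) := by
    have h1 : a ⊗ₖ α = ((1 : Matrix (Fin m) (Fin m) ℂ) ⊗ₖ α) *
        (a ⊗ₖ (1 : Matrix (Fin m) (Fin m) ℂ)) := by
      rw [← mul_kronecker_mul, Matrix.one_mul, Matrix.mul_one]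
    have h2 : b ⊗ₖ β = (b ⊗ₖ (1 : Matrix (Fin m) (Fin m) ℂ)) *
        ((1 : Matrix (Fin m) (Fin m) ℂ) ⊗ₖ β) := by
      rw [← mul_kronecker_mul, Matrix.one_mul, Matrix.mul_one]
    rw [h1, h2]
    simp only [Matrix.mul_assoc]
  rw [hfac, ← mulVec_mulVec, ← mulVec_mulVec, dotProduct_mulVec] at htr
  have hbound := norm_dotProduct_mulVec_le y (diagVec (Fin m) ᵥ* (a ⊗ₖ α))
    ((b ⊗ₖ β) *ᵥ diagVec (Fin m))
  rw [htr, Complex.norm_real, Real.norm_of_nonneg hP0] at hbound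
  simp only [Fintype.sum_prod_type (α₁ := Fin m) (α₂ := Fin m), diagVec_vecMul_kronecker,
    kronecker_mulVec_diagVec] at hbound
  refine hbound.trans ?_
  have hsq : ∀ c : ℝ, 0 ≤ c → √(c ^ 2 * P ^ (1 - 1 / p.toReal)) =
      c * √(P ^ (1 - 1 / p.toReal)) := fun c hc => by
    rw [Real.sqrt_mul (sq_nonneg c), Real.sqrt_sq hc]
  have hα' := (Real.sqrt_le_sqrt hα).trans_eq (hsq _ (schattenNorm_nonneg _ _))
  have hβ' := (Real.sqrt_le_sqrt hβ).trans_eq (hsq _ (schattenNorm_nonneg _ _))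
  calc _ ≤ schattenNorm (2 * p) a * √(P ^ (1 - 1 / p.toReal)) * ‖y‖ *
        (schattenNorm (2 * p) b * √(P ^ (1 - 1 / p.toReal))) := by
        gcongr
        exact mul_nonneg (mul_nonneg (schattenNorm_nonneg _ _) (Real.sqrt_nonneg _)) (norm_nonneg _)
    _ = schattenNorm (2 * p) a * ‖y‖ * schattenNorm (2 * p) b *
        (√(P ^ (1 - 1 / p.toReal)) * √(P ^ (1 - 1 / p.toReal))) := by ring
    _ = _ := by rw [Real.mul_self_sqrt (Real.rpow_nonneg hP _)]

lemma amp_contr (u : Matrix (Fin N) (Fin N) ℂ →ₗ[ℂ] Matrix (Fin m) (Fin m) ℂ) {k : ℕ}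
    (x : Matrix (Fin N × Fin n) (Fin N × Fin n) ℂ) (w : Matrix (Fin k × Fin n) (Fin k × Fin n) ℂ) :
    amp u (contr x w) = contr (amp u x) w := by
  ext ⟨i, i'⟩ ⟨j, j'⟩
  have h : (of fun r c => contr x w (r, i') (c, j')) =
      ∑ k, ∑ l, w (i', k) (j', l) • (of fun r c => x (r, k) (c, l)) := by
    ext r c
    simp [contr, Matrix.sum_apply, mul_comm]
  simp only [amp, of_apply, h, map_sum, map_smul, Matrix.sum_apply, Matrix.smul_apply, smul_eq_mul]
  simp only [contr, of_apply, mul_comm]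

/-! ### Regular maps on Schatten classes -/

variable {C : ℝ} {u : Matrix (Fin N) (Fin N) ℂ →ₗ[ℂ] Matrix (Fin m) (Fin m) ℂ}

lemma nonneg_of_pisierNorm_le {k : ℕ} {x : Matrix (Fin N × Fin k) (Fin N × Fin k) ℂ}
    (hr : pisierNorm p (amp u x) ≤ C * pisierNorm p x) (hx : 0 < pisierNorm p x) : 0 ≤ C :=
  nonneg_of_mul_nonneg_left ((pisierNorm_nonneg _).trans hr) hx

lemma le_mul_of_forall_pos {X Y C θ a b : ℝ} (hX : 0 ≤ X) (hY : 0 ≤ Y) (hC : 0 ≤ C) (hθ0 : 0 < θ)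
    (hθ1 : θ ≤ 1)
    (h : ∀ ε : ℝ, 0 < ε → X ≤ C * (Y + a * ε) ^ θ * (X + b * ε) ^ (1 - θ)) :
    X ^ θ ≤ C * Y ^ θ := by
  have hcont : Continuous fun ε : ℝ => C * (Y + a * ε) ^ θ * (X + b * ε) ^ (1 - θ) :=
    (continuous_const.mul ((continuous_const.add (continuous_const.mul continuous_id)).rpow_const
      fun _ => Or.inr hθ0.le)).mul ((continuous_const.add (continuous_const.mul
      continuous_id)).rpow_const fun _ => Or.inr (sub_nonneg.2 hθ1))
  have hlim := (hcont.tendsto 0).mono_left (nhdsWithin_le_nhds (s := Set.Ioi 0))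
  have hle : X ≤ C * Y ^ θ * X ^ (1 - θ) := by
    have := ge_of_tendsto hlim (Filter.eventually_of_mem self_mem_nhdsWithin fun ε hε => h ε hε)
    simpa using this
  rcases hX.eq_or_lt with h0 | h0
  · rw [← h0, Real.zero_rpow hθ0.ne']
    exact mul_nonneg hC (Real.rpow_nonneg hY _)
  · refine le_of_mul_le_mul_right ?_ (Real.rpow_pos_of_pos h0 (1 - θ))
    rwa [← Real.rpow_add h0, add_sub_cancel, Real.rpow_one]

lemma schattenNorm_zero (hp : 1 ≤ p) (hpt : p ≠ ∞) : schattenNorm p (0 : Matrix ι ι ℂ) = 0 := by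
  have hp0 : 0 < p.toReal := ENNReal.toReal_pos (by positivity) hpt
  have h0 : (posSemidef_conjTranspose_mul_self (0 : Matrix ι ι ℂ)).isHermitian.eigenvalues = 0 :=
    (IsHermitian.eigenvalues_eq_zero_iff _).2 (by simp)
  rw [schattenNorm, if_neg hpt, h0]
  simp [Real.zero_rpow hp0.ne', Real.zero_rpow (inv_pos.2 hp0).ne']

theorem schattenNorm_amp_le (hp : 1 ≤ p) (hpt : p ≠ ∞)
    (hr : ∀ n : ℕ, 1 ≤ n → ∀ x : Matrix (Fin N × Fin n) (Fin N × Fin n) ℂ,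
      pisierNorm p (amp u x) ≤ C * pisierNorm p x)
    (x : Matrix (Fin N × Fin n) (Fin N × Fin n) ℂ) :
    schattenNorm p (amp u x) ≤ C * schattenNorm p x := by
  have hp0 : 0 < p.toReal := ENNReal.toReal_pos (by positivity) hpt
  have hp1 : 1 ≤ p.toReal := by simpa using ENNReal.toReal_mono hpt hp
  obtain ⟨U, V, s, h, hs⟩ := exists_isSVD_schattenNorm hpt x
  have hs0 : ∀ i, 0 ≤ s i ^ p.toReal := fun i => Real.rpow_nonneg (h.nonneg i) _
  rcases (Finset.sum_nonneg fun i _ => hs0 i).eq_or_lt with hP | hP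
  · have hx : x = 0 := by
      have hz : ∀ i, s i = 0 := fun i => (Real.rpow_eq_zero (h.nonneg i) hp0.ne').1
        ((Finset.sum_eq_zero_iff_of_nonneg fun i _ => hs0 i).1 hP.symm i (Finset.mem_univ i))
      rw [h.eq]
      simp [hz]
    have hv : amp u x = 0 := by
      ext i j
      have h0 : (of fun r c => x (r, i.2) (c, j.2)) = 0 := by
        ext
        simp [hx]
      simp [amp, h0]
    rw [hv, hx, schattenNorm_zero hp hpt, schattenNorm_zero hp hpt, mul_zero]
  have hN : 1 ≤ N := by
    by_contra hN
    obtain rfl : N = 0 := by omega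
    simp at hP
  have hC : 0 ≤ C := by
    have hL := marginal_posDef (U := U.map (starRingEnd ℂ)) (p := p.toReal) h.nonneg one_pos
    have hR := marginal_posDef (U := V.map (starRingEnd ℂ)) (p := p.toReal) h.nonneg one_pos
    have hlb := le_pisierNorm_contr_family_mul hp hpt h one_pos hL hR
    exact nonneg_of_pisierNorm_le (hr N hN _) (pos_of_mul_pos_left (hP.trans_le hlb)
      (Real.rpow_nonneg (add_nonneg hP.le (by positivity)) _))
  obtain ⟨U', V', s', h', hs'⟩ := exists_isSVD_schattenNorm hpt (amp u x)
  have hP' : 0 ≤ ∑ i, s' i ^ p.toReal :=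
    Finset.sum_nonneg fun i _ => Real.rpow_nonneg (h'.nonneg i) _
  rw [hs, hs']
  rcases Nat.eq_zero_or_pos m with hm | hm
  · subst hm
    have h0 : ∑ i, s' i ^ p.toReal = 0 := by simp
    rw [h0, Real.zero_rpow (one_div_pos.2 hp0).ne']
    exact mul_nonneg hC (Real.rpow_nonneg hP.le _)
  refine le_mul_of_forall_pos (a := N) (b := m) hP' hP.le hC (one_div_pos.2 hp0)
    ((div_le_one hp0).2 hp1) fun ε hε => ?_
  have hL := marginal_posDef (U := U'.map (starRingEnd ℂ)) (p := p.toReal) h'.nonneg hε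
  have hR := marginal_posDef (U := V'.map (starRingEnd ℂ)) (p := p.toReal) h'.nonneg hε
  refine (le_pisierNorm_contr_family_mul hp hpt h' hε hL hR).trans
    (mul_le_mul_of_nonneg_right ?_ (Real.rpow_nonneg (add_nonneg hP' (by positivity)) _))
  rw [← amp_contr]
  exact (hr m hm _).trans (mul_le_mul_of_nonneg_left
    (pisierNorm_contr_family_le hp hpt h h'.map_conj hε hL hR) hC)

lemma norm_kronecker_one_le (a : Matrix ι ι ℂ) : ‖a ⊗ₖ (1 : Matrix κ κ ℂ)‖ ≤ ‖a‖ := by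
  rcases eq_or_ne a 0 with rfl | ha
  · simp
  have h0 : ‖a‖ ≠ 0 := norm_ne_zero_iff.2 ha
  have h1 : ‖(((‖a‖⁻¹ : ℝ) : ℂ) • a) ⊗ₖ (1 : Matrix κ κ ℂ)‖ ≤ 1 := norm_kronecker_one_le_one (by
    rw [norm_smul, Complex.norm_real, norm_inv, norm_norm, inv_mul_cancel₀ h0])
  rwa [smul_kronecker, norm_smul, Complex.norm_real, norm_inv, norm_norm, inv_mul_le_iff₀
    (norm_pos_iff.2 ha), mul_one] at h1

lemma pisierNorm_top (x : Matrix (Fin N × Fin n) (Fin N × Fin n) ℂ) :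
    pisierNorm ∞ x = schattenNorm ∞ x := by
  have htop : (2 * ∞ : ℝ≥0∞) = ∞ := by simp
  have hsch : ∀ {κ : Type} [Fintype κ] [DecidableEq κ] (y : Matrix κ κ ℂ),
      schattenNorm ∞ y = ‖y‖ := fun y => by rw [schattenNorm, if_pos rfl]; rfl
  have hone : ‖(1 : Matrix (Fin N) (Fin N) ℂ)‖ ≤ 1 := by
    rw [norm_le_one_iff]
    simp [PosSemidef.zero]
  rw [hsch]
  refine le_antisymm ?_ ?_
  · refine (pisierNorm_le (y := x) 1 1 ?_).trans ?_
    · rw [one_kronecker_one, Matrix.one_mul, Matrix.mul_one]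
    · rw [htop, hsch]
      calc _ ≤ 1 * ‖x‖ * 1 := by gcongr
        _ = ‖x‖ := by ring
  · have h := le_pisierNorm_mul (p := ∞) (x := x) (X := ‖x‖) zero_le_one fun a b y hy => ?_
    · simpa using h
    rw [htop, hsch, hsch, mul_one]
    conv_lhs => rw [hy]
    refine (l2_opNorm_mul _ _).trans ?_
    gcongr
    · refine (l2_opNorm_mul _ _).trans ?_
      gcongr
      exact norm_kronecker_one_le a
    · exact norm_kronecker_one_le b

end pisierNorm

end PisierSchatten

end

/-- Matrix-algebra form of Proposition 2.2: every regular map is completely bounded with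
`‖u‖_cb ≤ ‖u‖_r`. -/
theorem schatten_bound_of_regular {N m : ℕ} (p : ℝ≥0∞) (hp : 1 ≤ p) (C : ℝ)
    (u : Matrix (Fin N) (Fin N) ℂ →ₗ[ℂ] Matrix (Fin m) (Fin m) ℂ)
    (hr : ∀ n : ℕ, 1 ≤ n → ∀ x : Matrix (Fin N × Fin n) (Fin N × Fin n) ℂ,
      pisierNorm p (amp (⇑u) x) ≤ C * pisierNorm p x) :
    ∀ n : ℕ, 1 ≤ n → ∀ x : Matrix (Fin N × Fin n) (Fin N × Fin n) ℂ,
      schattenNorm p (amp (⇑u) x) ≤ C * schattenNorm p x := by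
  intro n hn x
  rcases eq_or_ne p ∞ with rfl | hpt
  · rw [← PisierSchatten.pisierNorm_top, ← PisierSchatten.pisierNorm_top]
    exact hr n hn x
  · exact PisierSchatten.schattenNorm_amp_le hp hpt hr x
end

section
/- Let 1 ≤ p ≤ ∞ and n, m ≥ 1. The function ρ_p is a norm on M_n ⊗ M_m: it is finite everywhere, absolutely homogeneous, satisfies the triangle inequality ρ_p(a + b) ≤ ρ_p(a) + ρ_p(b), and ρ_p(a) = 0 implies a = 0. (The conclusion of Theorem 3.1; the paper notes that the triangle inequality is surprisingly nontrivial.) -/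
open scoped Kronecker ENNReal Classical ComplexOrder
open Matrix

/-- The sesquilinear form `(x, y) ↦ ⟨x, A y⟩` of a complex matrix. -/
def sform {ι : Type} [Fintype ι] (A : Matrix ι ι ℂ) (x y : ι → ℂ) : ℂ :=
  star x ⬝ᵥ (A *ᵥ y)

section Sform

variable {ι : Type} [Fintype ι]

theorem sform_add (A B : Matrix ι ι ℂ) (x y : ι → ℂ) :
    sform (A + B) x y = sform A x y + sform B x y := by
  simp [sform, add_mulVec, dotProduct_add]

theorem sform_sub (A B : Matrix ι ι ℂ) (x y : ι → ℂ) :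
    sform (A - B) x y = sform A x y - sform B x y := by
  simp [sform, sub_mulVec, dotProduct_sub]

theorem sform_smul (c : ℂ) (A : Matrix ι ι ℂ) (x y : ι → ℂ) :
    sform (c • A) x y = c * sform A x y := by
  simp [sform, smul_mulVec, dotProduct_smul]

theorem sform_mul_mul (A B C : Matrix ι ι ℂ) (x y : ι → ℂ) :
    sform (A * B * C) x y = sform B (Aᴴ *ᵥ x) (C *ᵥ y) := by
  simp [sform, star_mulVec, dotProduct_mulVec, vecMul_vecMul, Matrix.mul_assoc]

theorem sform_one_eq_norm_sq [DecidableEq ι] (x : ι → ℂ) :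
    sform 1 x x = ((‖WithLp.toLp 2 x‖ ^ 2 : ℝ) : ℂ) := by
  have h := inner_self_eq_norm_sq_to_K (𝕜 := ℂ) (WithLp.toLp 2 x)
  rw [EuclideanSpace.inner_eq_star_dotProduct] at h
  rw [sform, one_mulVec, dotProduct_comm]
  simpa using h

theorem sform_self_mul_conjTranspose [DecidableEq ι] (A : Matrix ι ι ℂ) (x : ι → ℂ) :
    sform (A * Aᴴ) x x = ((‖WithLp.toLp 2 (Aᴴ *ᵥ x)‖ ^ 2 : ℝ) : ℂ) := by
  rw [← sform_one_eq_norm_sq, ← sform_mul_mul, Matrix.mul_one]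

theorem sform_conjTranspose_mul_self [DecidableEq ι] (A : Matrix ι ι ℂ) (x : ι → ℂ) :
    sform (Aᴴ * A) x x = ((‖WithLp.toLp 2 (A *ᵥ x)‖ ^ 2 : ℝ) : ℂ) := by
  simpa using sform_self_mul_conjTranspose Aᴴ x

theorem Matrix.PosSemidef.sform_re_nonneg {A : Matrix ι ι ℂ} (hA : A.PosSemidef) (x : ι → ℂ) :
    0 ≤ (sform A x x).re :=
  hA.re_dotProduct_nonneg x

theorem Matrix.PosSemidef.sform_re_le {A B : Matrix ι ι ℂ} (h : (B - A).PosSemidef)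
    (x : ι → ℂ) : (sform A x x).re ≤ (sform B x x).re := by
  have := h.sform_re_nonneg x
  rw [sform_sub, Complex.sub_re] at this
  linarith

theorem Matrix.IsHermitian.posSemidef_of_sform {A : Matrix ι ι ℂ} (hA : A.IsHermitian)
    (h : ∀ x, 0 ≤ (sform A x x).re) : A.PosSemidef := by
  refine .of_dotProduct_mulVec_nonneg hA fun x => ?_
  rw [Complex.nonneg_iff]
  exact ⟨h x, (hA.im_star_dotProduct_mulVec_self x).symm⟩

theorem Matrix.IsHermitian.star_dotProduct_mulVec {A : Matrix ι ι ℂ} (hA : A.IsHermitian)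
    (x y : ι → ℂ) : star x ⬝ᵥ (A *ᵥ y) = star (A *ᵥ x) ⬝ᵥ y := by
  rw [dotProduct_mulVec, star_mulVec, hA.eq]

theorem opNorm_nonneg [DecidableEq ι] (g : Matrix ι ι ℂ) : 0 ≤ opNorm g := norm_nonneg _

theorem opNorm_smul [DecidableEq ι] (c : ℂ) (g : Matrix ι ι ℂ) :
    opNorm (c • g) = ‖c‖ * opNorm g := by
  simp [opNorm, norm_smul]

theorem norm_toLp_mulVec_le [DecidableEq ι] (g : Matrix ι ι ℂ) (y : ι → ℂ) :
    ‖WithLp.toLp 2 (g *ᵥ y)‖ ≤ opNorm g * ‖WithLp.toLp 2 y‖ := by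
  have := (LinearMap.toContinuousLinearMap (Matrix.toEuclideanLin g)).le_opNorm (WithLp.toLp 2 y)
  simpa [opNorm, toLpLin_toLp] using this

theorem norm_sform_le [DecidableEq ι] (g : Matrix ι ι ℂ) (x y : ι → ℂ) :
    ‖sform g x y‖ ≤ opNorm g * (‖WithLp.toLp 2 x‖ * ‖WithLp.toLp 2 y‖) := by
  have h := norm_inner_le_norm (𝕜 := ℂ) (WithLp.toLp 2 x) (WithLp.toLp 2 (g *ᵥ y))
  rw [EuclideanSpace.inner_eq_star_dotProduct, dotProduct_comm] at h
  refine h.trans ?_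
  have := mul_le_mul_of_nonneg_left (norm_toLp_mulVec_le g y) (norm_nonneg (WithLp.toLp 2 x))
  linarith

theorem opNorm_le_of_sform [DecidableEq ι] {g : Matrix ι ι ℂ} {r : ℝ} (hr : 0 ≤ r)
    (h : ∀ x y, 2 * ‖sform g x y‖ ≤ r * ((sform 1 x x).re + (sform 1 y y).re)) :
    opNorm g ≤ r := by
  refine ContinuousLinearMap.opNorm_le_of_unit_norm hr fun y hy => ?_
  obtain ⟨y, rfl⟩ : ∃ z, y = WithLp.toLp 2 z := ⟨y.ofLp, rfl⟩
  set t := ‖WithLp.toLp 2 (g *ᵥ y)‖ with ht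
  have key : t ≤ r := by
    by_cases h0 : t = 0
    · rw [h0]; exact hr
    have hpos : 0 < t := lt_of_le_of_ne (norm_nonneg _) (Ne.symm h0)
    have := h (((t⁻¹ : ℝ) : ℂ) • (g *ᵥ y)) y
    have h1 : sform g (((t⁻¹ : ℝ) : ℂ) • (g *ᵥ y)) y = (t : ℂ) := by
      have : sform g (g *ᵥ y) y = ((t ^ 2 : ℝ) : ℂ) := by
        rw [ht, ← sform_one_eq_norm_sq, sform, sform, one_mulVec]
      rw [sform] at this
      rw [sform, star_smul, smul_dotProduct, this]
      simp
      field_simp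
    rw [h1, sform_one_eq_norm_sq, sform_one_eq_norm_sq, WithLp.toLp_smul, norm_smul, hy,
      Complex.norm_real, Complex.norm_real, ← ht] at this
    simp only [Complex.ofReal_re, norm_inv, Real.norm_of_nonneg hpos.le] at this
    rw [inv_mul_cancel₀ h0] at this
    linarith
  simpa [toLpLin_toLp] using key

theorem opNorm_conjTranspose [DecidableEq ι] (g : Matrix ι ι ℂ) : opNorm gᴴ = opNorm g := by
  have aux : ∀ g : Matrix ι ι ℂ, opNorm gᴴ ≤ opNorm g := fun g => by
    refine opNorm_le_of_sform (opNorm_nonneg g) fun x y => ?_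
    have h1 : sform gᴴ x y = star (sform g y x) := by
      rw [sform, sform, dotProduct_mulVec, ← star_mulVec, ← star_dotProduct_star, star_star,
        dotProduct_comm]
    rw [h1, norm_star, sform_one_eq_norm_sq, sform_one_eq_norm_sq, Complex.ofReal_re,
      Complex.ofReal_re]
    have h2 := norm_sform_le g y x
    nlinarith [mul_nonneg (opNorm_nonneg g) (sq_nonneg (‖WithLp.toLp 2 x‖ - ‖WithLp.toLp 2 y‖))]
  refine le_antisymm (aux g) ?_
  simpa using aux gᴴ

theorem two_mul_norm_sform_mul_le [DecidableEq ι] (S T : Matrix ι ι ℂ) (hS : S.IsHermitian)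
    (hT : T.IsHermitian) (x y : ι → ℂ) :
    2 * ‖sform (S * T) x y‖ ≤ (sform (S * S) x x).re + (sform (T * T) y y).re := by
  have h1 : sform (S * T) x y = sform 1 (S *ᵥ x) (T *ᵥ y) := by
    conv_rhs => rw [← hS.eq]
    rw [← sform_mul_mul, Matrix.mul_one]
  have h2 := sform_self_mul_conjTranspose S x
  have h3 := sform_conjTranspose_mul_self T y
  rw [hS.eq] at h2
  rw [hT.eq] at h3
  rw [h1, h2, h3, Complex.ofReal_re, Complex.ofReal_re]
  have h4 := norm_inner_le_norm (𝕜 := ℂ) (WithLp.toLp 2 (S *ᵥ x)) (WithLp.toLp 2 (T *ᵥ y))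
  rw [EuclideanSpace.inner_eq_star_dotProduct, dotProduct_comm] at h4
  rw [sform, one_mulVec]
  nlinarith [sq_nonneg (‖WithLp.toLp 2 (S *ᵥ x)‖ - ‖WithLp.toLp 2 (T *ᵥ y)‖)]

/-- If `2 |⟨x, X y⟩| ≤ ‖S x‖² + ‖T y‖²` and `S T = V²`, then `X ≤ V²`. -/
theorem posSemidef_sub_of_sform_le [DecidableEq ι] {S T V X : Matrix ι ι ℂ}
    (hS : S.IsHermitian) (hT : T.IsHermitian) (hV : V.IsHermitian) (hX : X.IsHermitian)
    (hSu : IsUnit S) (hTu : IsUnit T) (hVu : IsUnit V) (hST : S * T = V * V)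
    (h : ∀ x y, 2 * ‖sform X x y‖ ≤ (sform (S * S) x x).re + (sform (T * T) y y).re) :
    (V * V - X).PosSemidef := by
  have hV1 : V * V⁻¹ = 1 := mul_nonsing_inv V ((isUnit_iff_isUnit_det V).1 hVu)
  have hV2 : V⁻¹ * V = 1 := nonsing_inv_mul V ((isUnit_iff_isUnit_det V).1 hVu)
  have hS1 : S * S⁻¹ = 1 := mul_nonsing_inv S ((isUnit_iff_isUnit_det S).1 hSu)
  have hT2 : T⁻¹ * T = 1 := nonsing_inv_mul T ((isUnit_iff_isUnit_det T).1 hTu)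
  set M := 1 - V⁻¹ * X * V⁻¹ with hM
  have hMH : M.IsHermitian := by
    refine isHermitian_one.sub ?_
    have := isHermitian_mul_mul_conjTranspose V⁻¹ hX
    rwa [hV.inv.eq] at this
  have hMpos : M.PosSemidef := by
    rw [hMH.posSemidef_iff_eigenvalues_nonneg]
    intro j
    set v : ι → ℂ := ⇑(hMH.eigenvectorBasis j) with hv
    set ν := hMH.eigenvalues j
    have hMv : M *ᵥ v = ν • v := hMH.mulVec_eigenvectorBasis j
    have hv0 : v ≠ 0 := by
      intro h0
      apply hMH.eigenvectorBasis.orthonormal.ne_zero j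
      ext i
      exact congrFun h0 i
    set z := V⁻¹ *ᵥ v with hz
    have hvz : v = V *ᵥ z := by rw [hz, mulVec_mulVec, hV1, one_mulVec]
    have hXz : X *ᵥ z = ((1 - ν : ℝ) : ℂ) • (S *ᵥ (T *ᵥ z)) := by
      have h1 : X *ᵥ z = V *ᵥ (v - M *ᵥ v) := by
        rw [hM, sub_mulVec, one_mulVec, sub_sub_cancel, mulVec_mulVec v V, ← Matrix.mul_assoc,
          ← Matrix.mul_assoc, hV1, Matrix.one_mul, ← mulVec_mulVec]
      rw [h1, hMv, mulVec_mulVec, hST, ← mulVec_mulVec, ← hvz, mulVec_sub]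
      ext i
      simp [mulVec_smul, sub_mul]
    set t := ‖WithLp.toLp 2 (T *ᵥ z)‖ with ht
    have hTz : T *ᵥ z ≠ 0 := by
      intro h0
      apply hv0
      rw [hvz, ← one_mulVec z, ← hT2, ← mulVec_mulVec, h0]
      simp
    have htpos : 0 < t := by
      rw [ht, norm_pos_iff]
      intro h0
      exact hTz (congrArg WithLp.ofLp h0)
    have hSinv : S *ᵥ (S⁻¹ *ᵥ (T *ᵥ z)) = T *ᵥ z := by
      rw [mulVec_mulVec, hS1, one_mulVec]
    have key := h (S⁻¹ *ᵥ (T *ᵥ z)) z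
    have e1 := sform_self_mul_conjTranspose S (S⁻¹ *ᵥ (T *ᵥ z))
    have e2 := sform_conjTranspose_mul_self T z
    rw [hS.eq, hSinv, ← ht] at e1
    rw [hT.eq, ← ht] at e2
    have e3 : sform X (S⁻¹ *ᵥ (T *ᵥ z)) z = ((1 - ν : ℝ) : ℂ) * ((t ^ 2 : ℝ) : ℂ) := by
      rw [sform, hXz, dotProduct_smul, smul_eq_mul, ← e2, sform, ← mulVec_mulVec]
      congr 1
      rw [hS.star_dotProduct_mulVec, hSinv, hT.star_dotProduct_mulVec z]
    rw [e1, e2, e3, norm_mul, Complex.norm_real, Complex.norm_real,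
      Real.norm_of_nonneg (sq_nonneg t), Complex.ofReal_re] at key
    have h2 : ‖1 - ν‖ ≤ 1 := by
      have : 0 < t ^ 2 := by positivity
      nlinarith
    have := (abs_le.1 h2).2
    change 0 ≤ ν
    linarith
  have := hMpos.conjTranspose_mul_mul_same V
  rw [hV.eq, hM, Matrix.mul_sub, Matrix.sub_mul, Matrix.mul_one] at this
  convert this using 2
  rw [← Matrix.mul_assoc, ← Matrix.mul_assoc, hV1, Matrix.one_mul, Matrix.mul_assoc, hV2,
    Matrix.mul_one]

end Sform

theorem mem_of_isClosed_of_midpoint_mem {s : Set ℝ} {a b : ℝ} (hs : IsClosed s) (ha : a ∈ s)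
    (hb : b ∈ s) (hmid : ∀ x ∈ s ∩ Set.Icc a b, ∀ y ∈ s ∩ Set.Icc a b, (x + y) / 2 ∈ s)
    {t : ℝ} (ht : t ∈ Set.Icc a b) : t ∈ s := by
  have hcl : IsCompact (s ∩ Set.Icc a t) := isCompact_Icc.inter_left hs
  have hcr : IsCompact (s ∩ Set.Icc t b) := isCompact_Icc.inter_left hs
  obtain ⟨x, ⟨hxs, hx⟩, hxmax⟩ := hcl.exists_isGreatest ⟨a, ha, le_rfl, ht.1⟩
  obtain ⟨y, ⟨hys, hy⟩, hymin⟩ := hcr.exists_isLeast ⟨b, hb, ht.2, le_rfl⟩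
  have hm := hmid x ⟨hxs, hx.1, hx.2.trans ht.2⟩ y ⟨hys, ht.1.trans hy.1, hy.2⟩
  rcases le_total ((x + y) / 2) t with h | h
  · have := hxmax ⟨hm, by linarith [hx.1, hx.2, hy.1], h⟩
    have : t = x := by linarith [hx.2, hy.1]
    exact this ▸ hxs
  · have := hymin ⟨hm, h, by linarith [hx.2, hy.1, hy.2]⟩
    have : t = y := by linarith [hx.2, hy.1]
    exact this ▸ hys

/-- A continuous one-parameter group of Hermitian matrices, such as the real powers of a positive
definite matrix. -/
structure IsPowerFamily {ι : Type} [Fintype ι] [DecidableEq ι] (F : ℝ → Matrix ι ι ℂ) : Prop where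
  continuous : Continuous F
  zero : F 0 = 1
  add : ∀ s t, F (s + t) = F s * F t
  isHermitian : ∀ s, (F s).IsHermitian

namespace IsPowerFamily

variable {ι κ : Type} [Fintype ι] [DecidableEq ι] [Fintype κ] [DecidableEq κ]

theorem mul_neg {F : ℝ → Matrix ι ι ℂ} (hF : IsPowerFamily F) (s : ℝ) : F s * F (-s) = 1 := by
  rw [← hF.add, add_neg_cancel, hF.zero]

theorem kronecker_isHermitian {F : ℝ → Matrix ι ι ℂ} {G : ℝ → Matrix κ κ ℂ}
    (hF : IsPowerFamily F) (hG : IsPowerFamily G) (s t : ℝ) : (F s ⊗ₖ G t).IsHermitian := by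
  rw [IsHermitian, conjTranspose_kronecker, hF.isHermitian, hG.isHermitian]

theorem kronecker_isUnit {F : ℝ → Matrix ι ι ℂ} {G : ℝ → Matrix κ κ ℂ}
    (hF : IsPowerFamily F) (hG : IsPowerFamily G) (s t : ℝ) : IsUnit (F s ⊗ₖ G t) := by
  refine IsUnit.of_mul_eq_one (F (-s) ⊗ₖ G (-t)) ?_
  rw [← mul_kronecker_mul, hF.mul_neg, hG.mul_neg, one_kronecker_one]

theorem kronecker_mul_kronecker {F : ℝ → Matrix ι ι ℂ} {G : ℝ → Matrix κ κ ℂ}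
    (hF : IsPowerFamily F) (hG : IsPowerFamily G) (s t s' t' : ℝ) :
    (F s ⊗ₖ G t) * (F s' ⊗ₖ G t') = F (s + s') ⊗ₖ G (t + t') := by
  rw [← mul_kronecker_mul, hF.add, hG.add]

theorem continuous_kronecker {F : ℝ → Matrix ι ι ℂ} {G : ℝ → Matrix κ κ ℂ}
    (hF : IsPowerFamily F) (hG : IsPowerFamily G) :
    Continuous fun s : ℝ => F s ⊗ₖ G (1 - s) := by
  refine continuous_pi fun i => continuous_pi fun j => ?_
  simp only [kroneckerMap_apply]
  have h1 : Continuous fun s => F s i.1 j.1 := hF.continuous.matrix_elem _ _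
  have h2 : Continuous fun s => G s i.2 j.2 := hG.continuous.matrix_elem _ _
  exact h1.mul (h2.comp (continuous_const.sub continuous_id))

/-- **Lieb–Ando concavity**: the map `(A, B) ↦ A ^ s ⊗ B ^ (1 - s)` is jointly concave. -/
theorem posSemidef_kronecker_sub {F F₁ F₂ : ℝ → Matrix ι ι ℂ} {G G₁ G₂ : ℝ → Matrix κ κ ℂ}
    (hF : IsPowerFamily F) (hF₁ : IsPowerFamily F₁) (hF₂ : IsPowerFamily F₂)
    (hG : IsPowerFamily G) (hG₁ : IsPowerFamily G₁) (hG₂ : IsPowerFamily G₂)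
    {c₁ c₂ : ℝ} (hc₁ : 0 ≤ c₁) (hc₂ : 0 ≤ c₂)
    (hFs : F 1 = (c₁ : ℂ) • F₁ 1 + (c₂ : ℂ) • F₂ 1)
    (hGs : G 1 = (c₁ : ℂ) • G₁ 1 + (c₂ : ℂ) • G₂ 1) {s : ℝ} (hs : s ∈ Set.Icc (0 : ℝ) 1) :
    (F s ⊗ₖ G (1 - s) -
      ((c₁ : ℂ) • (F₁ s ⊗ₖ G₁ (1 - s)) + (c₂ : ℂ) • (F₂ s ⊗ₖ G₂ (1 - s)))).PosSemidef := by
  set X : ℝ → Matrix (ι × κ) (ι × κ) ℂ := fun s =>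
    (c₁ : ℂ) • (F₁ s ⊗ₖ G₁ (1 - s)) + (c₂ : ℂ) • (F₂ s ⊗ₖ G₂ (1 - s)) with hX
  have hXH : ∀ s, (X s).IsHermitian := fun s => by
    refine IsHermitian.add ?_ ?_
    · rw [IsHermitian, conjTranspose_smul, hF₁.kronecker_isHermitian hG₁]
      simp
    · rw [IsHermitian, conjTranspose_smul, hF₂.kronecker_isHermitian hG₂]
      simp
  have hHH : ∀ s, (F s ⊗ₖ G (1 - s)).IsHermitian := fun s => hF.kronecker_isHermitian hG _ _
  have hcont : ∀ x, Continuous fun s => (sform (F s ⊗ₖ G (1 - s) - X s) x x).re := fun x => by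
    have hXc : Continuous X :=
      ((hF₁.continuous_kronecker hG₁).const_smul (c₁ : ℂ)).add
        ((hF₂.continuous_kronecker hG₂).const_smul (c₂ : ℂ))
    have h : Continuous fun s => F s ⊗ₖ G (1 - s) - X s := (hF.continuous_kronecker hG).sub hXc
    exact Complex.continuous_re.comp
      (continuous_const.dotProduct (h.matrix_mulVec continuous_const))
  have hclosed : IsClosed {s : ℝ | (F s ⊗ₖ G (1 - s) - X s).PosSemidef} := by
    have : {s : ℝ | (F s ⊗ₖ G (1 - s) - X s).PosSemidef} =
        ⋂ x, {s : ℝ | 0 ≤ (sform (F s ⊗ₖ G (1 - s) - X s) x x).re} := by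
      ext s
      simp only [Set.mem_ofPred_eq, Set.mem_iInter]
      exact ⟨fun h x => h.sform_re_nonneg x, ((hHH s).sub (hXH s)).posSemidef_of_sform⟩
    rw [this]
    exact isClosed_iInter fun x => isClosed_le continuous_const (hcont x)
  refine mem_of_isClosed_of_midpoint_mem (s := {s : ℝ | (F s ⊗ₖ G (1 - s) - X s).PosSemidef})
    hclosed ?_ ?_ ?_ hs
  · have : F 0 ⊗ₖ G (1 - 0) - X 0 = 0 := by
      simp only [hX, sub_zero, hF.zero, hF₁.zero, hF₂.zero, hGs, kronecker_add, kronecker_smul,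
        sub_self]
    rw [Set.mem_ofPred_eq, this]
    exact .zero
  · have : F 1 ⊗ₖ G (1 - 1) - X 1 = 0 := by
      simp only [hX, sub_self, hG.zero, hG₁.zero, hG₂.zero, hFs, add_kronecker, smul_kronecker]
    rw [Set.mem_ofPred_eq, this]
    exact .zero
  · rintro u ⟨hu, -⟩ v ⟨hv, -⟩
    rw [Set.mem_ofPred_eq] at hu hv ⊢
    have hV : (F ((u + v) / 2) ⊗ₖ G (1 - (u + v) / 2)) =
        (F ((u + v) / 4) ⊗ₖ G ((1 - (u + v) / 2) / 2)) *
          (F ((u + v) / 4) ⊗ₖ G ((1 - (u + v) / 2) / 2)) := by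
      rw [hF.kronecker_mul_kronecker hG]; congr 2 <;> ring
    have hsq : ∀ {F : ℝ → Matrix ι ι ℂ} {G : ℝ → Matrix κ κ ℂ} (_ : IsPowerFamily F)
        (_ : IsPowerFamily G) (w : ℝ), (F (w / 2) ⊗ₖ G ((1 - w) / 2)) *
          (F (w / 2) ⊗ₖ G ((1 - w) / 2)) = F w ⊗ₖ G (1 - w) := fun hF hG w => by
      rw [hF.kronecker_mul_kronecker hG]; congr 2 <;> ring
    have hmul : ∀ {F : ℝ → Matrix ι ι ℂ} {G : ℝ → Matrix κ κ ℂ} (_ : IsPowerFamily F)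
        (_ : IsPowerFamily G), (F (u / 2) ⊗ₖ G ((1 - u) / 2)) *
          (F (v / 2) ⊗ₖ G ((1 - v) / 2)) = F ((u + v) / 2) ⊗ₖ G (1 - (u + v) / 2) :=
        fun hF hG => by
      rw [hF.kronecker_mul_kronecker hG]; congr 2 <;> ring
    rw [hV]
    refine posSemidef_sub_of_sform_le (hF.kronecker_isHermitian hG (u / 2) ((1 - u) / 2))
      (hF.kronecker_isHermitian hG (v / 2) ((1 - v) / 2)) (hF.kronecker_isHermitian hG _ _)
      (hXH _) (hF.kronecker_isUnit hG _ _) (hF.kronecker_isUnit hG _ _)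
      (hF.kronecker_isUnit hG _ _) ((hmul hF hG).trans hV) fun x y => ?_
    rw [hsq hF hG, hsq hF hG]
    refine le_trans ?_ (add_le_add (hu.sform_re_le x) (hv.sform_re_le y))
    have h₁ := two_mul_norm_sform_mul_le _ _ (hF₁.kronecker_isHermitian hG₁ (u / 2) ((1 - u) / 2))
      (hF₁.kronecker_isHermitian hG₁ (v / 2) ((1 - v) / 2)) x y
    have h₂ := two_mul_norm_sform_mul_le _ _ (hF₂.kronecker_isHermitian hG₂ (u / 2) ((1 - u) / 2))
      (hF₂.kronecker_isHermitian hG₂ (v / 2) ((1 - v) / 2)) x y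
    rw [hmul hF₁ hG₁, hsq hF₁ hG₁, hsq hF₁ hG₁] at h₁
    rw [hmul hF₂ hG₂, hsq hF₂ hG₂, hsq hF₂ hG₂] at h₂
    simp only [hX, sform_add, sform_smul, Complex.add_re, Complex.re_ofReal_mul]
    refine (mul_le_mul_of_nonneg_left (norm_add_le _ _) zero_le_two).trans ?_
    rw [norm_mul, norm_mul, Complex.norm_of_nonneg hc₁, Complex.norm_of_nonneg hc₂]
    have := mul_le_mul_of_nonneg_left h₁ hc₁
    have := mul_le_mul_of_nonneg_left h₂ hc₂
    linarith

end IsPowerFamily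

/-- The matrix `U diag(d) U*` with real coefficients `d`. -/
def specDiag {ι : Type} [Fintype ι] [DecidableEq ι] (U : Matrix ι ι ℂ) (d : ι → ℝ) :
    Matrix ι ι ℂ :=
  U * diagonal (fun i => (d i : ℂ)) * Uᴴ

section SpecDiag

variable {ι : Type} [Fintype ι] [DecidableEq ι]

theorem specDiag_mul {U : Matrix ι ι ℂ} (hU : Uᴴ * U = 1) (d e : ι → ℝ) :
    specDiag U d * specDiag U e = specDiag U (fun i => d i * e i) := by
  calc specDiag U d * specDiag U e
      = U * diagonal (fun i => (d i : ℂ)) * (Uᴴ * U) * diagonal (fun i => (e i : ℂ)) * Uᴴ := by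
        simp only [specDiag, Matrix.mul_assoc]
    _ = specDiag U (fun i => d i * e i) := by
        rw [hU, Matrix.mul_one, Matrix.mul_assoc U, diagonal_mul_diagonal]
        simp [specDiag]

theorem specDiag_one {U : Matrix ι ι ℂ} (hU : Uᴴ * U = 1) : specDiag U (fun _ => 1) = 1 := by
  simp [specDiag, mul_eq_one_comm.1 hU]

theorem specDiag_sub (U : Matrix ι ι ℂ) (d e : ι → ℝ) :
    specDiag U (fun i => d i - e i) = specDiag U d - specDiag U e := by
  simp only [specDiag, ← Matrix.mul_sub, ← Matrix.sub_mul, diagonal_sub, Complex.ofReal_sub]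

theorem specDiag_smul (U : Matrix ι ι ℂ) (c : ℝ) (d : ι → ℝ) :
    specDiag U (fun i => c * d i) = (c : ℂ) • specDiag U d := by
  have : diagonal (fun i => ((c * d i : ℝ) : ℂ)) = (c : ℂ) • diagonal (fun i => (d i : ℂ)) := by
    ext i j
    by_cases h : i = j <;> simp [h]
  rw [specDiag, specDiag, this]
  simp

theorem specDiag_isHermitian (U : Matrix ι ι ℂ) (d : ι → ℝ) : (specDiag U d).IsHermitian := by
  refine isHermitian_mul_mul_conjTranspose U ?_
  rw [IsHermitian, diagonal_conjTranspose]
  congr 1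
  ext i
  simp

theorem specDiag_posSemidef (U : Matrix ι ι ℂ) {d : ι → ℝ} (hd : ∀ i, 0 ≤ d i) :
    (specDiag U d).PosSemidef :=
  (PosSemidef.diagonal fun i => Complex.zero_le_real.2 (hd i)).mul_mul_conjTranspose_same U

theorem specDiag_posDef {U : Matrix ι ι ℂ} (hU : Uᴴ * U = 1) {d : ι → ℝ} (hd : ∀ i, 0 < d i) :
    (specDiag U d).PosDef := by
  refine (PosDef.diagonal fun i => Complex.zero_lt_real.2 (hd i)).mul_mul_conjTranspose_same ?_
  exact vecMul_injective_of_isUnit (IsUnit.of_mul_eq_one _ (mul_eq_one_comm.1 hU))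

theorem trace_specDiag {U : Matrix ι ι ℂ} (hU : Uᴴ * U = 1) (d : ι → ℝ) :
    (specDiag U d).trace = ((∑ i, d i : ℝ) : ℂ) := by
  rw [specDiag, trace_mul_cycle, hU, Matrix.one_mul, trace_diagonal, Complex.ofReal_sum]

theorem isPowerFamily_specDiag {U : Matrix ι ι ℂ} (hU : Uᴴ * U = 1) {d : ι → ℝ}
    (hd : ∀ i, 0 < d i) : IsPowerFamily fun s => specDiag U (fun i => d i ^ s) where
  continuous := by
    refine (continuous_const.matrix_mul (Continuous.matrix_diagonal ?_)).matrix_mul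
      continuous_const
    exact continuous_pi fun i => Complex.continuous_ofReal.comp
      (Real.continuous_const_rpow (hd i).ne')
  zero := by simpa using specDiag_one hU
  add s t := by
    rw [specDiag_mul hU]
    congr 1
    ext i
    exact Real.rpow_add (hd i) s t
  isHermitian s := specDiag_isHermitian _ _

theorem Matrix.IsHermitian.exists_eq_specDiag {A : Matrix ι ι ℂ} (hA : A.IsHermitian) :
    ∃ U : Matrix ι ι ℂ, Uᴴ * U = 1 ∧ A = specDiag U hA.eigenvalues := by
  refine ⟨hA.eigenvectorUnitary, ?_, ?_⟩
  · exact Unitary.coe_star_mul_self hA.eigenvectorUnitary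
  · conv_lhs => rw [hA.spectral_theorem]
    rfl

theorem sum_eigenvalues_eq_of_charpoly_eq {A : Matrix ι ι ℂ} (hA : A.IsHermitian) {d : ι → ℝ}
    (h : A.charpoly = (diagonal fun i => (d i : ℂ)).charpoly) (f : ℝ → ℝ) :
    ∑ i, f (hA.eigenvalues i) = ∑ i, f (d i) := by
  have h1 := hA.roots_charpoly_eq_eigenvalues
  have h2 : (diagonal fun i => (d i : ℂ)).charpoly.roots =
      Multiset.map (fun i => (d i : ℂ)) Finset.univ.val := by
    rw [charpoly_diagonal, Polynomial.roots_prod]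
    · simp
    · exact Finset.prod_ne_zero_iff.2 fun i _ => Polynomial.X_sub_C_ne_zero _
  rw [h, h2] at h1
  have h3 := congrArg (fun m : Multiset ℂ => (m.map fun z => f z.re).sum) h1
  simpa [Multiset.map_map, Function.comp_def] using h3.symm

theorem sum_eigenvalues_specDiag {U : Matrix ι ι ℂ} (hU : Uᴴ * U = 1) {d : ι → ℝ}
    {A : Matrix ι ι ℂ} (hA : A.IsHermitian) (h : A = specDiag U d) (f : ℝ → ℝ) :
    ∑ i, f (hA.eigenvalues i) = ∑ i, f (d i) := by
  refine sum_eigenvalues_eq_of_charpoly_eq hA ?_ f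
  rw [h, specDiag, charpoly_mul_comm, ← Matrix.mul_assoc, hU, Matrix.one_mul]

end SpecDiag

section Schatten

variable {ι : Type} [Fintype ι] [DecidableEq ι]

theorem schattenNorm_nonneg (p : ℝ≥0∞) (a : Matrix ι ι ℂ) : 0 ≤ schattenNorm p a := by
  unfold schattenNorm
  split_ifs
  · exact opNorm_nonneg a
  · exact Real.rpow_nonneg
      (Finset.sum_nonneg fun i _ => Real.rpow_nonneg (Real.sqrt_nonneg _) _) _

theorem schattenNorm_conjTranspose (p : ℝ≥0∞) (a : Matrix ι ι ℂ) :
    schattenNorm p aᴴ = schattenNorm p a := by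
  unfold schattenNorm
  rw [opNorm_conjTranspose]
  have : (posSemidef_conjTranspose_mul_self aᴴ).isHermitian.eigenvalues =
      (posSemidef_conjTranspose_mul_self a).isHermitian.eigenvalues := by
    rw [IsHermitian.eigenvalues_eq_eigenvalues_iff, conjTranspose_conjTranspose, charpoly_mul_comm]
  rw [this]

/-- The positive definite matrices in the unit ball of the Schatten `p`-norm, described through
a diagonalization. -/
def SchattenBall (p : ℝ≥0∞) (A : Matrix ι ι ℂ) : Prop :=
  ∃ (U : Matrix ι ι ℂ) (d : ι → ℝ), Uᴴ * U = 1 ∧ (∀ i, 0 < d i) ∧ A = specDiag U d ∧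
    (p = ∞ → ∀ i, d i ≤ 1) ∧ (p ≠ ∞ → ∑ i, d i ^ p.toReal ≤ 1)

theorem SchattenBall.posSemidef {p : ℝ≥0∞} {A : Matrix ι ι ℂ} (h : SchattenBall p A) :
    A.PosSemidef := by
  obtain ⟨U, d, -, hd, rfl, -⟩ := h
  exact specDiag_posSemidef U fun i => (hd i).le

theorem SchattenBall.one_sub_posSemidef {p : ℝ≥0∞} (hp : 1 ≤ p) {A : Matrix ι ι ℂ}
    (h : SchattenBall p A) : (1 - A).PosSemidef := by
  obtain ⟨U, d, hU, hd, rfl, htop, hfin⟩ := h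
  rw [← specDiag_one hU, ← specDiag_sub]
  refine specDiag_posSemidef U fun i => sub_nonneg.2 ?_
  by_cases hpt : p = ∞
  · exact htop hpt i
  · have hP : 0 < p.toReal := ENNReal.toReal_pos (zero_lt_one.trans_le hp).ne' hpt
    have h1 : d i ^ p.toReal ≤ 1 :=
      (Finset.single_le_sum (f := fun i => d i ^ p.toReal)
        (fun j _ => Real.rpow_nonneg (hd j).le _) (Finset.mem_univ i)).trans (hfin hpt)
    by_contra hlt
    exact absurd (Real.one_lt_rpow (not_le.1 hlt) hP) (not_lt.2 h1)

theorem schattenBall_top_one : SchattenBall ∞ (1 : Matrix ι ι ℂ) :=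
  ⟨1, fun _ => 1, by simp, fun _ => one_pos, (specDiag_one (by simp)).symm, fun _ _ => le_rfl,
    fun h => absurd rfl h⟩

theorem exists_schattenBall_of_schattenNorm_lt {p : ℝ≥0∞} (hp : 1 ≤ p) {a : Matrix ι ι ℂ}
    {r : ℝ} (h : schattenNorm (2 * p) a < r) :
    ∃ A, SchattenBall p A ∧ (((r ^ 2 : ℝ) : ℂ) • A - aᴴ * a).PosSemidef := by
  have hr : 0 < r := (schattenNorm_nonneg _ _).trans_lt h
  by_cases hpt : p = ∞
  · subst hpt
    refine ⟨1, schattenBall_top_one, ?_⟩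
    rw [schattenNorm, if_pos (by simp)] at h
    refine IsHermitian.posSemidef_of_sform ?_ fun x => ?_
    · refine IsHermitian.sub ?_ (isHermitian_conjTranspose_mul_self a)
      rw [IsHermitian, conjTranspose_smul]
      simp
    · rw [sform_sub, sform_smul, sform_conjTranspose_mul_self, sform_one_eq_norm_sq,
        ← Complex.ofReal_mul, ← Complex.ofReal_sub, Complex.ofReal_re, sub_nonneg, ← mul_pow]
      refine pow_le_pow_left₀ (norm_nonneg _) ((norm_toLp_mulVec_le a x).trans ?_) 2
      exact mul_le_mul_of_nonneg_right h.le (norm_nonneg _)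
  · set P := p.toReal with hPdef
    have hP : 0 < P := ENNReal.toReal_pos (zero_lt_one.trans_le hp).ne' hpt
    set hH := (posSemidef_conjTranspose_mul_self a).isHermitian
    set e := hH.eigenvalues with he
    have he0 : ∀ i, 0 ≤ e i := (posSemidef_conjTranspose_mul_self a).eigenvalues_nonneg
    obtain ⟨U, hU, hUe⟩ := hH.exists_eq_specDiag
    have htr : (2 * p).toReal = 2 * P := by simp [hPdef]
    have hsqrt : ∀ i, √(e i) ^ (2 * P) = e i ^ P := fun i => by
      rw [Real.rpow_mul (Real.sqrt_nonneg _), Real.rpow_two, Real.sq_sqrt (he0 i)]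
    have hsum0 : 0 ≤ ∑ i, e i ^ P := Finset.sum_nonneg fun i _ => Real.rpow_nonneg (he0 i) _
    have hlt : ∑ i, e i ^ P < (r ^ 2) ^ P := by
      rw [schattenNorm, if_neg (ENNReal.mul_ne_top (by simp) hpt), htr] at h
      simp only [← he, hsqrt] at h
      have h2P : 0 < 2 * P := by positivity
      have h2 := Real.rpow_lt_rpow (Real.rpow_nonneg hsum0 _) h h2P
      rwa [one_div, Real.rpow_inv_rpow hsum0 h2P.ne', Real.rpow_mul hr.le, Real.rpow_two] at h2
    have hcont : Continuous fun ε : ℝ => ∑ i, (e i + ε) ^ P :=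
      continuous_finsetSum _ fun i _ =>
        (continuous_const.add continuous_id).rpow_const fun _ => Or.inr hP.le
    have hev : ∀ᶠ ε in nhdsWithin (0 : ℝ) (Set.Ioi 0), ∑ i, (e i + ε) ^ P < (r ^ 2) ^ P := by
      refine nhdsWithin_le_nhds (hcont.continuousAt.eventually_lt continuousAt_const ?_)
      simpa using hlt
    obtain ⟨ε, hε, hε0 : 0 < ε⟩ := (hev.and self_mem_nhdsWithin).exists
    have hr2 : 0 < r ^ 2 := by positivity
    refine ⟨specDiag U fun i => (e i + ε) / r ^ 2,
      ⟨U, _, hU, fun i => div_pos (add_pos_of_nonneg_of_pos (he0 i) hε0) hr2, rfl,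
        fun h => absurd h hpt, fun _ => ?_⟩, ?_⟩
    · simp only [Real.div_rpow (add_nonneg (he0 _) hε0.le) hr2.le]
      rw [← Finset.sum_div]
      exact (div_le_one (Real.rpow_pos_of_pos hr2 _)).2 hε.le
    · rw [← specDiag_smul]
      rw [hUe, ← specDiag_sub]
      refine specDiag_posSemidef U fun i => ?_
      rw [mul_div_cancel₀ _ hr2.ne']
      linarith

theorem SchattenBall.exists_sqrt {p : ℝ≥0∞} (hp : 1 ≤ p) {A : Matrix ι ι ℂ}
    (h : SchattenBall p A) :
    ∃ K : Matrix ι ι ℂ, K.IsHermitian ∧ IsUnit K ∧ K * K = A ∧ schattenNorm (2 * p) K ≤ 1 := by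
  have hA1 := h.one_sub_posSemidef hp
  obtain ⟨U, d, hU, hd, hA, -, hfin⟩ := h
  have hKK : specDiag U (fun i => √(d i)) * specDiag U (fun i => √(d i)) = A := by
    rw [specDiag_mul hU, hA]
    congr 1
    ext i
    exact Real.mul_self_sqrt (hd i).le
  have hKH := specDiag_isHermitian U fun i => √(d i)
  refine ⟨_, hKH, (specDiag_posDef hU fun i => Real.sqrt_pos.2 (hd i)).isUnit, hKK, ?_⟩
  set K := specDiag U fun i => √(d i)
  by_cases hpt : p = ∞
  · rw [schattenNorm, if_pos (by simp [hpt])]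
    refine opNorm_le_of_sform zero_le_one fun x y => ?_
    have := two_mul_norm_sform_mul_le 1 K isHermitian_one hKH x y
    rw [Matrix.one_mul, Matrix.one_mul, hKK] at this
    have h2 := hA1.sform_re_le y
    linarith
  · have hP : 0 < p.toReal := ENNReal.toReal_pos (zero_lt_one.trans_le hp).ne' hpt
    have htr : (2 * p).toReal = 2 * p.toReal := by simp
    rw [schattenNorm, if_neg (ENNReal.mul_ne_top (by simp) hpt), htr]
    rw [sum_eigenvalues_specDiag hU _ ((by rw [hKH.eq, hKK, hA]) : Kᴴ * K = specDiag U d)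
      (fun x => √x ^ (2 * p.toReal))]
    have hsqrt : ∀ i, √(d i) ^ (2 * p.toReal) = d i ^ p.toReal := fun i => by
      rw [Real.rpow_mul (Real.sqrt_nonneg _), Real.rpow_two, Real.sq_sqrt (hd i).le]
    simp only [hsqrt]
    exact Real.rpow_le_one (Finset.sum_nonneg fun i _ => Real.rpow_nonneg (hd i).le _)
      (hfin hpt) (by positivity)

/-- Averages of `p`-th powers stay in the Schatten `p`-ball. -/
theorem SchattenBall.exists_powerFamily {p : ℝ≥0∞} (hp : 1 ≤ p) (hpt : p ≠ ∞)
    {A₁ A₂ : Matrix ι ι ℂ} (h₁ : SchattenBall p A₁) (h₂ : SchattenBall p A₂) {c₁ c₂ : ℝ}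
    (hc₁ : 0 < c₁) (hc₂ : 0 < c₂) (hc : c₁ + c₂ = 1) :
    ∃ F₁ F₂ F : ℝ → Matrix ι ι ℂ, IsPowerFamily F₁ ∧ IsPowerFamily F₂ ∧ IsPowerFamily F ∧
      F₁ p.toReal⁻¹ = A₁ ∧ F₂ p.toReal⁻¹ = A₂ ∧ SchattenBall p (F p.toReal⁻¹) ∧
      F 1 = (c₁ : ℂ) • F₁ 1 + (c₂ : ℂ) • F₂ 1 := by
  obtain ⟨U₁, d₁, hU₁, hd₁, hA₁, -, hs₁⟩ := h₁
  obtain ⟨U₂, d₂, hU₂, hd₂, hA₂, -, hs₂⟩ := h₂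
  have hP : 0 < p.toReal := ENNReal.toReal_pos (zero_lt_one.trans_le hp).ne' hpt
  set P := p.toReal
  have hd₁' : ∀ i, 0 < d₁ i ^ P := fun i => Real.rpow_pos_of_pos (hd₁ i) _
  have hd₂' : ∀ i, 0 < d₂ i ^ P := fun i => Real.rpow_pos_of_pos (hd₂ i) _
  set X := (c₁ : ℂ) • specDiag U₁ (fun i => d₁ i ^ P) +
    (c₂ : ℂ) • specDiag U₂ (fun i => d₂ i ^ P) with hX
  have hXpos : X.PosDef :=
    ((specDiag_posDef hU₁ hd₁').smul (Complex.zero_lt_real.2 hc₁)).add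
      ((specDiag_posDef hU₂ hd₂').smul (Complex.zero_lt_real.2 hc₂))
  obtain ⟨U, hU, hXU⟩ := hXpos.isHermitian.exists_eq_specDiag
  set e := hXpos.isHermitian.eigenvalues
  have he : ∀ i, 0 < e i := hXpos.eigenvalues_pos
  have htrace : ∑ i, e i ≤ 1 := by
    have h := congrArg (fun M => (trace M).re) hXU
    simp only [hX, trace_add, trace_smul, trace_specDiag hU, trace_specDiag hU₁,
      trace_specDiag hU₂, smul_eq_mul, Complex.add_re, Complex.re_ofReal_mul,
      Complex.ofReal_re] at h
    rw [← h]
    have := mul_le_mul_of_nonneg_left (hs₁ hpt) hc₁.le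
    have := mul_le_mul_of_nonneg_left (hs₂ hpt) hc₂.le
    linarith
  refine ⟨_, _, _, isPowerFamily_specDiag hU₁ hd₁', isPowerFamily_specDiag hU₂ hd₂',
    isPowerFamily_specDiag hU he, ?_, ?_, ⟨U, _, hU, fun i => Real.rpow_pos_of_pos (he i) _, rfl,
      fun h => absurd h hpt, fun _ => ?_⟩, ?_⟩
  · simp only [Real.rpow_rpow_inv (hd₁ _).le hP.ne', hA₁]
  · simp only [Real.rpow_rpow_inv (hd₂ _).le hP.ne', hA₂]
  · change ∑ i, (e i ^ P⁻¹) ^ P ≤ 1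
    simpa only [Real.rpow_inv_rpow (he _).le hP.ne'] using htrace
  · simp only [Real.rpow_one]
    exact hXU.symm

end Schatten

section Kronecker

variable {ι κ : Type} [Fintype ι] [Fintype κ]

theorem Matrix.PosSemidef.kronecker_sub_kronecker {A A' : Matrix ι ι ℂ} {B B' : Matrix κ κ ℂ}
    (hA : A.PosSemidef) (hB' : B'.PosSemidef) (hAA' : (A' - A).PosSemidef)
    (hBB' : (B' - B).PosSemidef) : (A' ⊗ₖ B' - A ⊗ₖ B).PosSemidef := by
  have : A' ⊗ₖ B' - A ⊗ₖ B = (A' - A) ⊗ₖ B' + A ⊗ₖ (B' - B) := by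
    ext i j
    simp [kroneckerMap_apply]
    ring
  rw [this]
  exact (hAA'.kronecker hB').add (hA.kronecker hBB')

variable [DecidableEq ι] [DecidableEq κ]

/-- A convex combination of tensors `A ⊗ B`, with `A` in the `p`-ball and `B` in the ball of the
conjugate exponent, is dominated by a single tensor of this kind. -/
theorem SchattenBall.exists_kronecker {p q : ℝ≥0∞} (hp : 1 ≤ p) (hpq : p⁻¹ + q⁻¹ = 1)
    {A₁ A₂ : Matrix ι ι ℂ} {B₁ B₂ : Matrix κ κ ℂ}
    (hA₁ : SchattenBall p A₁) (hA₂ : SchattenBall p A₂)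
    (hB₁ : SchattenBall q B₁) (hB₂ : SchattenBall q B₂)
    {c₁ c₂ : ℝ} (hc₁ : 0 < c₁) (hc₂ : 0 < c₂) (hc : c₁ + c₂ = 1) :
    ∃ A B, SchattenBall p A ∧ SchattenBall q B ∧
      (A ⊗ₖ B - ((c₁ : ℂ) • (A₁ ⊗ₖ B₁) + (c₂ : ℂ) • (A₂ ⊗ₖ B₂))).PosSemidef := by
  have hq : 1 ≤ q := by
    rw [← ENNReal.inv_le_one, ← hpq]
    exact le_add_self
  have h1 := Complex.zero_le_real.2 hc₁.le
  have h2 := Complex.zero_le_real.2 hc₂.le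
  by_cases hpt : p = ∞
  · have hq1 : q = 1 := by simpa [hpt] using hpq
    subst hpt hq1
    obtain ⟨G₁, G₂, G, -, -, -, hG₁, hG₂, hG, hGs⟩ :=
      hB₁.exists_powerFamily le_rfl ENNReal.one_ne_top hB₂ hc₁ hc₂ hc
    rw [ENNReal.toReal_one, inv_one] at hG₁ hG₂ hG
    refine ⟨1, G 1, schattenBall_top_one, hG, ?_⟩
    rw [hGs, hG₁, hG₂, kronecker_add, kronecker_smul, kronecker_smul, add_sub_add_comm,
      ← smul_sub, ← smul_sub]
    exact ((hA₁.posSemidef.kronecker_sub_kronecker hB₁.posSemidef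
        (hA₁.one_sub_posSemidef hp) (by simpa using PosSemidef.zero)).smul h1).add
      ((hA₂.posSemidef.kronecker_sub_kronecker hB₂.posSemidef
        (hA₂.one_sub_posSemidef hp) (by simpa using PosSemidef.zero)).smul h2)
  by_cases hqt : q = ∞
  · have hp1 : p = 1 := by simpa [hqt] using hpq
    subst hqt hp1
    obtain ⟨F₁, F₂, F, -, -, -, hF₁, hF₂, hF, hFs⟩ :=
      hA₁.exists_powerFamily le_rfl ENNReal.one_ne_top hA₂ hc₁ hc₂ hc
    rw [ENNReal.toReal_one, inv_one] at hF₁ hF₂ hF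
    refine ⟨F 1, 1, hF, schattenBall_top_one, ?_⟩
    rw [hFs, hF₁, hF₂, add_kronecker, smul_kronecker, smul_kronecker, add_sub_add_comm,
      ← smul_sub, ← smul_sub]
    exact ((hA₁.posSemidef.kronecker_sub_kronecker PosSemidef.one
        (by simpa using PosSemidef.zero) (hB₁.one_sub_posSemidef hq)).smul h1).add
      ((hA₂.posSemidef.kronecker_sub_kronecker PosSemidef.one
        (by simpa using PosSemidef.zero) (hB₂.one_sub_posSemidef hq)).smul h2)
  obtain ⟨F₁, F₂, F, pF₁, pF₂, pF, hF₁, hF₂, hF, hFs⟩ :=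
    hA₁.exists_powerFamily hp hpt hA₂ hc₁ hc₂ hc
  obtain ⟨G₁, G₂, G, pG₁, pG₂, pG, hG₁, hG₂, hG, hGs⟩ :=
    hB₁.exists_powerFamily hq hqt hB₂ hc₁ hc₂ hc
  have hs : p.toReal⁻¹ + q.toReal⁻¹ = 1 := by
    rw [← ENNReal.toReal_inv, ← ENNReal.toReal_inv, ← ENNReal.toReal_add, hpq,
      ENNReal.toReal_one]
    · exact ENNReal.inv_ne_top.2 (zero_lt_one.trans_le hp).ne'
    · exact ENNReal.inv_ne_top.2 (zero_lt_one.trans_le hq).ne'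
  have hs' : q.toReal⁻¹ = 1 - p.toReal⁻¹ := by linarith
  have hp0 : 0 ≤ p.toReal⁻¹ := inv_nonneg.2 ENNReal.toReal_nonneg
  have hq0 : 0 ≤ q.toReal⁻¹ := inv_nonneg.2 ENNReal.toReal_nonneg
  refine ⟨_, _, hF, hG, ?_⟩
  have := pF.posSemidef_kronecker_sub pF₁ pF₂ pG pG₁ pG₂ hc₁.le hc₂.le hFs hGs
    (s := p.toReal⁻¹) ⟨hp0, by linarith⟩
  rwa [← hs', hF₁, hF₂, hG₁, hG₂] at this

end Kronecker

section Rho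

variable {n m : ℕ}

/-- The bound `2 |⟨x, a y⟩| ≤ r (⟨x, (A ⊗ B) x⟩ + ⟨y, (C ⊗ D) y⟩)` for some positive definite
`A, C` in the `p`-ball and `B, D` in the `q`-ball; it characterizes `rho p q a ≤ r` up to an
arbitrarily small loss. -/
def RhoBound (p q : ℝ≥0∞) (r : ℝ) (a : Matrix (Fin n × Fin m) (Fin n × Fin m) ℂ) : Prop :=
  ∃ (A C : Matrix (Fin n) (Fin n) ℂ) (B D : Matrix (Fin m) (Fin m) ℂ),
    SchattenBall p A ∧ SchattenBall p C ∧ SchattenBall q B ∧ SchattenBall q D ∧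
    ∀ x y, 2 * ‖sform a x y‖ ≤ r * ((sform (A ⊗ₖ B) x x).re + (sform (C ⊗ₖ D) y y).re)

theorem rho_bddBelow (p q : ℝ≥0∞) (a : Matrix (Fin n × Fin m) (Fin n × Fin m) ℂ) :
    BddBelow { r | ∃ (γ δ : Matrix (Fin n) (Fin n) ℂ) (α β : Matrix (Fin m) (Fin m) ℂ)
      (g : Matrix (Fin n × Fin m) (Fin n × Fin m) ℂ),
      a = (γ ⊗ₖ α) * g * (δ ⊗ₖ β) ∧
      r = schattenNorm (2 * p) γ * schattenNorm (2 * q) α * opNorm g *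
          schattenNorm (2 * p) δ * schattenNorm (2 * q) β } := by
  refine ⟨0, ?_⟩
  rintro _ ⟨γ, δ, α, β, g, -, rfl⟩
  have := schattenNorm_nonneg (2 * p) γ
  have := schattenNorm_nonneg (2 * q) α
  have := schattenNorm_nonneg (2 * p) δ
  have := schattenNorm_nonneg (2 * q) β
  have := opNorm_nonneg g
  positivity

theorem exists_factorization (a : Matrix (Fin n × Fin m) (Fin n × Fin m) ℂ) :
    ∃ (γ δ : Matrix (Fin n) (Fin n) ℂ) (α β : Matrix (Fin m) (Fin m) ℂ)
      (g : Matrix (Fin n × Fin m) (Fin n × Fin m) ℂ), a = (γ ⊗ₖ α) * g * (δ ⊗ₖ β) :=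
  ⟨1, 1, 1, 1, a, by simp⟩

theorem rho_nonneg (p q : ℝ≥0∞) (a : Matrix (Fin n × Fin m) (Fin n × Fin m) ℂ) :
    0 ≤ rho p q a := by
  refine Real.sInf_nonneg ?_
  rintro _ ⟨γ, δ, α, β, g, -, rfl⟩
  have := schattenNorm_nonneg (2 * p) γ
  have := schattenNorm_nonneg (2 * q) α
  have := schattenNorm_nonneg (2 * p) δ
  have := schattenNorm_nonneg (2 * q) β
  have := opNorm_nonneg g
  positivity

theorem rho_le_of_eq {p q : ℝ≥0∞} {a g : Matrix (Fin n × Fin m) (Fin n × Fin m) ℂ}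
    {γ δ : Matrix (Fin n) (Fin n) ℂ} {α β : Matrix (Fin m) (Fin m) ℂ}
    (h : a = (γ ⊗ₖ α) * g * (δ ⊗ₖ β)) :
    rho p q a ≤ schattenNorm (2 * p) γ * schattenNorm (2 * q) α * opNorm g *
      schattenNorm (2 * p) δ * schattenNorm (2 * q) β :=
  csInf_le (rho_bddBelow p q a) ⟨γ, δ, α, β, g, h, rfl⟩

theorem exists_of_rho_lt {p q : ℝ≥0∞} {a : Matrix (Fin n × Fin m) (Fin n × Fin m) ℂ} {r : ℝ}
    (h : rho p q a < r) :
    ∃ (γ δ : Matrix (Fin n) (Fin n) ℂ) (α β : Matrix (Fin m) (Fin m) ℂ)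
      (g : Matrix (Fin n × Fin m) (Fin n × Fin m) ℂ), a = (γ ⊗ₖ α) * g * (δ ⊗ₖ β) ∧
      schattenNorm (2 * p) γ * schattenNorm (2 * q) α * opNorm g *
        schattenNorm (2 * p) δ * schattenNorm (2 * q) β < r := by
  obtain ⟨γ, δ, α, β, g, hg⟩ := exists_factorization a
  obtain ⟨_, ⟨γ, δ, α, β, g, hg, rfl⟩, hlt⟩ :=
    exists_lt_of_csInf_lt (by exact ⟨_, γ, δ, α, β, g, hg, rfl⟩) h
  exact ⟨γ, δ, α, β, g, hg, hlt⟩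

theorem norm_kronecker_mulVec_le {p q : ℝ≥0∞} {γ A : Matrix (Fin n) (Fin n) ℂ}
    {α B : Matrix (Fin m) (Fin m) ℂ} {s t : ℝ} (hs : 0 ≤ s) (ht : 0 ≤ t)
    (hA : SchattenBall p A) (hB : SchattenBall q B)
    (hγ : (((s ^ 2 : ℝ) : ℂ) • A - γᴴ * γ).PosSemidef)
    (hα : (((t ^ 2 : ℝ) : ℂ) • B - αᴴ * α).PosSemidef) (x : Fin n × Fin m → ℂ) :
    ‖WithLp.toLp 2 ((γ ⊗ₖ α) *ᵥ x)‖ ≤ s * t * √(sform (A ⊗ₖ B) x x).re := by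
  have hu : 0 ≤ (sform (A ⊗ₖ B) x x).re :=
    (hA.posSemidef.kronecker hB.posSemidef).sform_re_nonneg x
  have h := ((posSemidef_conjTranspose_mul_self γ).kronecker_sub_kronecker
    (hB.posSemidef.smul (Complex.zero_le_real.2 (sq_nonneg t))) hγ hα).sform_re_le x
  rw [mul_kronecker_mul, ← conjTranspose_kronecker, sform_conjTranspose_mul_self,
    smul_kronecker, kronecker_smul, sform_smul, sform_smul, Complex.ofReal_re,
    Complex.re_ofReal_mul, Complex.re_ofReal_mul] at h
  refine (pow_le_pow_iff_left₀ (norm_nonneg _) (by positivity) two_ne_zero).1 (h.trans ?_)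
  rw [mul_pow, mul_pow, Real.sq_sqrt hu, mul_assoc]

theorem two_mul_le_of_le_mul_sqrt {N G y₁ y₂ y₃ y₄ u v s t r : ℝ} (hG : 0 ≤ G) (h₁ : 0 ≤ y₁)
    (h₂ : 0 ≤ y₂) (h₃ : 0 ≤ y₃) (h₄ : 0 ≤ y₄) (hu : 0 ≤ u) (hv : 0 ≤ v) (ht : 0 ≤ t)
    (hsu : s ≤ y₁ * y₂ * √u) (htv : t ≤ y₃ * y₄ * √v) (hN : N ≤ G * (s * t))
    (hr : y₁ * y₂ * G * y₃ * y₄ ≤ r) : 2 * N ≤ r * (u + v) := by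
  have hst := mul_le_mul_of_nonneg_left (mul_le_mul hsu htv ht (by positivity)) hG
  have huv : 2 * (√u * √v) ≤ u + v := by
    linarith [two_mul_le_add_sq √u √v, Real.sq_sqrt hu, Real.sq_sqrt hv]
  have := mul_le_mul hr huv (by positivity) (le_trans (by positivity) hr)
  linarith

theorem rhoBound_of_rho_lt {p q : ℝ≥0∞} (hp : 1 ≤ p) (hq : 1 ≤ q)
    {a : Matrix (Fin n × Fin m) (Fin n × Fin m) ℂ} {r : ℝ} (h : rho p q a < r) :
    RhoBound p q r a := by
  obtain ⟨γ, δ, α, β, g, rfl, hlt⟩ := exists_of_rho_lt h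
  have hcont : Continuous fun η : ℝ => (schattenNorm (2 * p) γ + η) *
      (schattenNorm (2 * q) α + η) * opNorm g * (schattenNorm (2 * p) δ + η) *
      (schattenNorm (2 * q) β + η) := by fun_prop
  have hev : ∀ᶠ η in nhdsWithin (0 : ℝ) (Set.Ioi 0), (schattenNorm (2 * p) γ + η) *
      (schattenNorm (2 * q) α + η) * opNorm g * (schattenNorm (2 * p) δ + η) *
      (schattenNorm (2 * q) β + η) < r := by
    refine nhdsWithin_le_nhds (hcont.continuousAt.eventually_lt continuousAt_const ?_)
    simpa using hlt
  obtain ⟨η, hη, hη0 : 0 < η⟩ := (hev.and self_mem_nhdsWithin).exists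
  obtain ⟨A, hA, hγ⟩ := exists_schattenBall_of_schattenNorm_lt hp (a := γᴴ)
    ((schattenNorm_conjTranspose _ _).trans_lt (lt_add_of_pos_right _ hη0))
  obtain ⟨B, hB, hα⟩ := exists_schattenBall_of_schattenNorm_lt hq (a := αᴴ)
    ((schattenNorm_conjTranspose _ _).trans_lt (lt_add_of_pos_right _ hη0))
  obtain ⟨C, hC, hδ⟩ := exists_schattenBall_of_schattenNorm_lt hp (a := δ)
    (lt_add_of_pos_right _ hη0)
  obtain ⟨D, hD, hβ⟩ := exists_schattenBall_of_schattenNorm_lt hq (a := β)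
    (lt_add_of_pos_right _ hη0)
  have y₁ := add_nonneg (schattenNorm_nonneg (2 * p) γ) hη0.le
  have y₂ := add_nonneg (schattenNorm_nonneg (2 * q) α) hη0.le
  have y₃ := add_nonneg (schattenNorm_nonneg (2 * p) δ) hη0.le
  have y₄ := add_nonneg (schattenNorm_nonneg (2 * q) β) hη0.le
  refine ⟨A, C, B, D, hA, hC, hB, hD, fun x y => ?_⟩
  have hx := norm_kronecker_mulVec_le y₁ y₂ hA hB hγ hα x
  have hy := norm_kronecker_mulVec_le y₃ y₄ hC hD hδ hβ y
  have hu := (hA.posSemidef.kronecker hB.posSemidef).sform_re_nonneg x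
  have hv := (hC.posSemidef.kronecker hD.posSemidef).sform_re_nonneg y
  rw [sform_mul_mul, conjTranspose_kronecker]
  exact two_mul_le_of_le_mul_sqrt (opNorm_nonneg g) y₁ y₂ y₃ y₄ hu hv (norm_nonneg _) hx hy
    (norm_sform_le g _ _) hη.le

theorem RhoBound.rho_le {p q : ℝ≥0∞} (hp : 1 ≤ p) (hq : 1 ≤ q)
    {a : Matrix (Fin n × Fin m) (Fin n × Fin m) ℂ} {r : ℝ} (hr : 0 ≤ r)
    (h : RhoBound p q r a) : rho p q a ≤ r := by
  obtain ⟨A, C, B, D, hA, hC, hB, hD, hb⟩ := h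
  obtain ⟨KA, hKA, uKA, rfl, nKA⟩ := hA.exists_sqrt hp
  obtain ⟨KC, hKC, uKC, rfl, nKC⟩ := hC.exists_sqrt hp
  obtain ⟨KB, hKB, uKB, rfl, nKB⟩ := hB.exists_sqrt hq
  obtain ⟨KD, hKD, uKD, rfl, nKD⟩ := hD.exists_sqrt hq
  rw [isUnit_iff_isUnit_det] at uKA uKB uKC uKD
  set g := (KA⁻¹ ⊗ₖ KB⁻¹) * a * (KC⁻¹ ⊗ₖ KD⁻¹) with hg
  have hfac : a = (KA ⊗ₖ KB) * g * (KC ⊗ₖ KD) := by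
    calc a = ((KA * KA⁻¹) ⊗ₖ (KB * KB⁻¹)) * a * ((KC⁻¹ * KC) ⊗ₖ (KD⁻¹ * KD)) := by
          rw [mul_nonsing_inv _ uKA, mul_nonsing_inv _ uKB, nonsing_inv_mul _ uKC,
            nonsing_inv_mul _ uKD]
          simp
      _ = _ := by
          rw [mul_kronecker_mul, mul_kronecker_mul, hg]
          simp only [Matrix.mul_assoc]
  have hinv : ∀ (K : Matrix (Fin n) (Fin n) ℂ) (L : Matrix (Fin m) (Fin m) ℂ),
      K.IsHermitian → L.IsHermitian → IsUnit K.det → IsUnit L.det → ∀ x,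
      sform ((K * K) ⊗ₖ (L * L)) ((K⁻¹ ⊗ₖ L⁻¹) *ᵥ x) ((K⁻¹ ⊗ₖ L⁻¹) *ᵥ x) = sform 1 x x := by
    intro K L hK hL uK uL x
    have hH : (K⁻¹ ⊗ₖ L⁻¹)ᴴ = K⁻¹ ⊗ₖ L⁻¹ := by
      rw [conjTranspose_kronecker, hK.inv.eq, hL.inv.eq]
    have := sform_mul_mul (K⁻¹ ⊗ₖ L⁻¹) ((K * K) ⊗ₖ (L * L)) (K⁻¹ ⊗ₖ L⁻¹) x x
    rw [hH] at this
    rw [← this, ← mul_kronecker_mul, ← mul_kronecker_mul, ← Matrix.mul_assoc, ← Matrix.mul_assoc,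
      nonsing_inv_mul _ uK, nonsing_inv_mul _ uL, Matrix.one_mul, Matrix.one_mul,
      mul_nonsing_inv _ uK, mul_nonsing_inv _ uL, one_kronecker_one]
  have hgr : opNorm g ≤ r := by
    refine opNorm_le_of_sform hr fun x y => ?_
    have := hb ((KA⁻¹ ⊗ₖ KB⁻¹) *ᵥ x) ((KC⁻¹ ⊗ₖ KD⁻¹) *ᵥ y)
    rw [hinv KA KB hKA hKB uKA uKB, hinv KC KD hKC hKD uKC uKD] at this
    rwa [hg, sform_mul_mul, conjTranspose_kronecker, hKA.inv.eq, hKB.inv.eq]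
  refine (rho_le_of_eq hfac).trans ?_
  have n₁ := schattenNorm_nonneg (2 * p) KA
  have n₂ := schattenNorm_nonneg (2 * q) KB
  have n₃ := schattenNorm_nonneg (2 * p) KC
  have n₄ := schattenNorm_nonneg (2 * q) KD
  have n₅ := opNorm_nonneg g
  calc _ ≤ 1 * 1 * r * 1 * 1 := by gcongr
    _ = r := by ring

theorem RhoBound.add {p q : ℝ≥0∞} (hp : 1 ≤ p) (hpq : p⁻¹ + q⁻¹ = 1)
    {a b : Matrix (Fin n × Fin m) (Fin n × Fin m) ℂ} {r s : ℝ} (hr : 0 < r) (hs : 0 < s)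
    (ha : RhoBound p q r a) (hb : RhoBound p q s b) : RhoBound p q (r + s) (a + b) := by
  obtain ⟨A₁, C₁, B₁, D₁, hA₁, hC₁, hB₁, hD₁, h₁⟩ := ha
  obtain ⟨A₂, C₂, B₂, D₂, hA₂, hC₂, hB₂, hD₂, h₂⟩ := hb
  have hrs : 0 < r + s := add_pos hr hs
  have hc : r / (r + s) + s / (r + s) = 1 := by rw [← add_div, div_self hrs.ne']
  obtain ⟨A, B, hA, hB, hAB⟩ := SchattenBall.exists_kronecker hp hpq hA₁ hA₂ hB₁ hB₂
    (div_pos hr hrs) (div_pos hs hrs) hc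
  obtain ⟨C, D, hC, hD, hCD⟩ := SchattenBall.exists_kronecker hp hpq hC₁ hC₂ hD₁ hD₂
    (div_pos hr hrs) (div_pos hs hrs) hc
  refine ⟨A, C, B, D, hA, hC, hB, hD, fun x y => ?_⟩
  have hx := mul_le_mul_of_nonneg_left (hAB.sform_re_le x) hrs.le
  have hy := mul_le_mul_of_nonneg_left (hCD.sform_re_le y) hrs.le
  simp only [sform_add, sform_smul, Complex.add_re, Complex.re_ofReal_mul, mul_add, ← mul_assoc,
    mul_div_cancel₀ _ hrs.ne'] at hx hy
  rw [sform_add]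
  have := norm_add_le (sform a x y) (sform b x y)
  have := h₁ x y
  have := h₂ x y
  linarith

theorem RhoBound.two_mul_norm_sform_le {p q : ℝ≥0∞} (hp : 1 ≤ p) (hq : 1 ≤ q)
    {a : Matrix (Fin n × Fin m) (Fin n × Fin m) ℂ} {r : ℝ} (hr : 0 ≤ r)
    (h : RhoBound p q r a) (x y : Fin n × Fin m → ℂ) :
    2 * ‖sform a x y‖ ≤ r * ((sform 1 x x).re + (sform 1 y y).re) := by
  obtain ⟨A, C, B, D, hA, hC, hB, hD, hb⟩ := h
  have hx := (hA.posSemidef.kronecker_sub_kronecker PosSemidef.one (hA.one_sub_posSemidef hp)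
    (hB.one_sub_posSemidef hq)).sform_re_le x
  have hy := (hC.posSemidef.kronecker_sub_kronecker PosSemidef.one (hC.one_sub_posSemidef hp)
    (hD.one_sub_posSemidef hq)).sform_re_le y
  rw [one_kronecker_one] at hx hy
  exact (hb x y).trans (mul_le_mul_of_nonneg_left (add_le_add hx hy) hr)

theorem opNorm_le_rho {p q : ℝ≥0∞} (hp : 1 ≤ p) (hq : 1 ≤ q)
    (a : Matrix (Fin n × Fin m) (Fin n × Fin m) ℂ) : opNorm a ≤ rho p q a :=
  le_of_forall_gt_imp_ge_of_dense fun r hr => by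
    have hr0 : 0 ≤ r := (rho_nonneg p q a).trans hr.le
    exact opNorm_le_of_sform hr0 fun x y =>
      (rhoBound_of_rho_lt hp hq hr).two_mul_norm_sform_le hp hq hr0 x y

theorem eq_zero_of_opNorm_eq_zero {a : Matrix (Fin n × Fin m) (Fin n × Fin m) ℂ}
    (h : opNorm a = 0) : a = 0 := by
  simpa [opNorm] using h

theorem rho_smul_le (p q : ℝ≥0∞) (c : ℂ) (a : Matrix (Fin n × Fin m) (Fin n × Fin m) ℂ) :
    rho p q (c • a) ≤ ‖c‖ * rho p q a := by
  by_cases hc : c = 0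
  · have h : c • a = (0 ⊗ₖ 0) * 0 * (0 ⊗ₖ 0) := by simp [hc]
    refine (rho_le_of_eq h).trans ?_
    simp [hc, opNorm]
  · have hc' : 0 < ‖c‖ := norm_pos_iff.2 hc
    rw [← div_le_iff₀' hc']
    refine le_of_forall_gt_imp_ge_of_dense fun r hr => ?_
    obtain ⟨γ, δ, α, β, g, rfl, hlt⟩ := exists_of_rho_lt hr
    have h : c • ((γ ⊗ₖ α) * g * (δ ⊗ₖ β)) = (γ ⊗ₖ α) * (c • g) * (δ ⊗ₖ β) := by simp
    rw [div_le_iff₀' hc']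
    refine (rho_le_of_eq h).trans ?_
    rw [opNorm_smul]
    have := mul_le_mul_of_nonneg_left hlt.le hc'.le
    linarith

theorem rho_smul (p q : ℝ≥0∞) (c : ℂ) (a : Matrix (Fin n × Fin m) (Fin n × Fin m) ℂ) :
    rho p q (c • a) = ‖c‖ * rho p q a := by
  refine le_antisymm (rho_smul_le p q c a) ?_
  by_cases hc : c = 0
  · simpa [hc] using rho_nonneg p q _
  · have h := rho_smul_le p q c⁻¹ (c • a)
    rw [inv_smul_smul₀ hc, norm_inv, ← div_eq_inv_mul, le_div_iff₀ (norm_pos_iff.2 hc)] at h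
    linarith

theorem rho_add_le {p q : ℝ≥0∞} (hp : 1 ≤ p) (hpq : p⁻¹ + q⁻¹ = 1)
    (a b : Matrix (Fin n × Fin m) (Fin n × Fin m) ℂ) :
    rho p q (a + b) ≤ rho p q a + rho p q b := by
  have hq : 1 ≤ q := by
    rw [← ENNReal.inv_le_one, ← hpq]
    exact le_add_self
  refine le_of_forall_pos_le_add fun ε hε => ?_
  have ha : rho p q a < rho p q a + ε / 2 := by linarith
  have hb : rho p q b < rho p q b + ε / 2 := by linarith
  have ha0 := (rho_nonneg p q a).trans_lt ha
  have hb0 := (rho_nonneg p q b).trans_lt hb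
  have := ((rhoBound_of_rho_lt hp hq ha).add hp hpq ha0 hb0
    (rhoBound_of_rho_lt hp hq hb)).rho_le hp hq (add_pos ha0 hb0).le
  linarith

end Rho

/-- Theorem 3.1 (conclusion): `ρ_p` is a norm on `M_n ⊗ M_m`: it is finite everywhere
(every element admits a factorization), absolutely homogeneous, satisfies the triangle
inequality, and vanishes only at `0`. -/
theorem rho_is_norm {n m : ℕ} (hn : 1 ≤ n) (hm : 1 ≤ m) (p q : ℝ≥0∞) (hp : 1 ≤ p)
    (hpq : p⁻¹ + q⁻¹ = 1) :
    (∀ a : Matrix (Fin n × Fin m) (Fin n × Fin m) ℂ,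
      ∃ (γ δ : Matrix (Fin n) (Fin n) ℂ) (α β : Matrix (Fin m) (Fin m) ℂ)
        (g : Matrix (Fin n × Fin m) (Fin n × Fin m) ℂ), a = (γ ⊗ₖ α) * g * (δ ⊗ₖ β)) ∧
    (∀ (c : ℂ) (a : Matrix (Fin n × Fin m) (Fin n × Fin m) ℂ),
      rho p q (c • a) = ‖c‖ * rho p q a) ∧
    (∀ a b : Matrix (Fin n × Fin m) (Fin n × Fin m) ℂ,
      rho p q (a + b) ≤ rho p q a + rho p q b) ∧
    (∀ a : Matrix (Fin n × Fin m) (Fin n × Fin m) ℂ, rho p q a = 0 → a = 0) := by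
  have hq : 1 ≤ q := by
    rw [← ENNReal.inv_le_one, ← hpq]
    exact le_add_self
  refine ⟨exists_factorization, rho_smul p q, rho_add_le hp hpq, fun a ha => ?_⟩
  exact eq_zero_of_opNorm_eq_zero
    (le_antisymm ((opNorm_le_rho hp hq a).trans_eq ha) (opNorm_nonneg a))
end
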